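/- arXiv:2508.03479 — 2 statements merged into one kernel-verified Lean document; each statement's English description precedes it below -/
import Mathlib

section
/- For every real ε > 0 there exists N such that the following holds: for every prime r, every power q = r^f of r, and every n ≥ 2, if G = PSL_n(q) satisfies |G| ≥ N, then Σ_p Q_p(G) < ε, where the sum is over all prime divisors p of |G| with p ≠ 2 and p ≠ r. -/
open Matrix


theorem aux_diag {K : Type*} [Field K] [IsAlgClosed K] {n : ℕ} (A : Matrix (Fin n) (Fin n) K)
    (N : ℕ) (hN : (N : K) ≠ 0) (hA : A ^ N = 1) :
    ∃ (S T : Matrix (Fin n) (Fin n) K) (D : Fin n → K), S * T = 1 ∧ T * S = 1 ∧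
      A = S * diagonal D * T := by
  classical
  let f : Module.End K (Fin n → K) := Matrix.toLin' A
  have hss : f.IsSemisimple := by
    have hsep : (Polynomial.X ^ N - 1 : Polynomial K).Separable := by
      have := Polynomial.separable_X_pow_sub_C (F := K) (n := N) 1 hN one_ne_zero
      simpa using this
    refine Module.End.isSemisimple_of_squarefree_aeval_eq_zero hsep.squarefree ?_
    have : f ^ N = 1 := by
      change (Matrix.toLin' A) ^ N = 1
      rw [← Matrix.toLin'_pow, hA, Matrix.toLin'_one]; rfl
    simp [this]
  have htop := hss.iSup_eigenspace_eq_top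
  have hint : DirectSum.IsInternal (fun μ : K => f.eigenspace μ) :=
    (DirectSum.isInternal_submodule_iff_iSupIndep_and_iSup_eq_top _).2
      ⟨f.eigenspaces_iSupIndep, htop⟩
  let b := hint.collectedBasis (fun μ => Module.finBasis K (f.eigenspace μ))
  have : Finite ((μ : K) × Fin (Module.finrank K (f.eigenspace μ))) :=
    Module.Finite.finite_basis b
  let _ := Fintype.ofFinite ((μ : K) × Fin (Module.finrank K (f.eigenspace μ)))
  have hcard : Fintype.card ((μ : K) × Fin (Module.finrank K (f.eigenspace μ))) =
      Fintype.card (Fin n) := by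
    rw [← Module.finrank_eq_card_basis b]; simp
  let e := Fintype.equivOfCardEq hcard
  let b' := b.reindex e
  have hb' : ∀ i, f (b' i) = (e.symm i).1 • b' i := by
    intro i
    have : b' i ∈ f.eigenspace (e.symm i).1 := by
      simp [b', b]
    exact Module.End.mem_eigenspace_iff.1 this
  refine ⟨(Pi.basisFun K (Fin n)).toMatrix b', b'.toMatrix (Pi.basisFun K (Fin n)),
    fun i => (e.symm i).1, Module.Basis.toMatrix_mul_toMatrix_flip _ _, Module.Basis.toMatrix_mul_toMatrix_flip _ _, ?_⟩
  have h1 : A * (Pi.basisFun K (Fin n)).toMatrix b' =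
      (Pi.basisFun K (Fin n)).toMatrix b' * diagonal (fun i => (e.symm i).1) := by
    ext i j
    have := congrFun (hb' j) i
    simp only [f, Matrix.toLin'_apply, Pi.smul_apply, smul_eq_mul] at this
    rw [Matrix.mul_diagonal]
    simp only [Module.Basis.toMatrix_apply, Pi.basisFun_repr]
    rw [mul_comm, ← this]
    simp [Matrix.mul_apply, Matrix.mulVec, dotProduct, Module.Basis.toMatrix_apply]
  rw [← h1, mul_assoc, Module.Basis.toMatrix_mul_toMatrix_flip, mul_one]

/-- The embedding of the special linear group in matrices over an extension field. -/
def Phi (F K : Type*) [Field F] [Field K] [Algebra F K] (n : ℕ) :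
    SpecialLinearGroup (Fin n) F →* Matrix (Fin n) (Fin n) K where
  toFun g := (algebraMap F K).mapMatrix g.1
  map_one' := by
    change (algebraMap F K).mapMatrix 1 = 1
    simp
  map_mul' a b := by
    change (algebraMap F K).mapMatrix (a.1 * b.1) = _
    simp

theorem Phi_inj (F K : Type*) [Field F] [Field K] [Algebra F K] (n : ℕ) :
    Function.Injective (Phi F K n) := by
  intro a b h
  apply Subtype.ext
  ext i j
  have := congrFun (congrFun h i) j
  exact (algebraMap F K).injective this

theorem Phi_det (F K : Type*) [Field F] [Field K] [Algebra F K] (n : ℕ)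
    (g : SpecialLinearGroup (Fin n) F) : (Phi F K n g).det = 1 := by
  change ((algebraMap F K).mapMatrix g.1).det = 1
  rw [← RingHom.map_det, g.2, map_one]

theorem Phi_mul_inv (F K : Type*) [Field F] [Field K] [Algebra F K] (n : ℕ)
    (g : SpecialLinearGroup (Fin n) F) : Phi F K n g * Phi F K n g⁻¹ = 1 := by
  rw [← map_mul, mul_inv_cancel, map_one]

theorem Phi_inv_mul (F K : Type*) [Field F] [Field K] [Algebra F K] (n : ℕ)
    (g : SpecialLinearGroup (Fin n) F) : Phi F K n g⁻¹ * Phi F K n g = 1 := by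
  rw [← map_mul, inv_mul_cancel, map_one]

theorem aux_count {F K : Type*} [Field F] [Fintype F] [Field K] [Algebra F K] {n : ℕ}
    (A A' S T : Matrix (Fin n) (Fin n) K) (D : Fin n → K) (hST : S * T = 1) (hTS : T * S = 1)
    (hA : A = S * diagonal D * T) [DecidableEq K] (d : ℕ)
    (hd : Fintype.card {ij : Fin n × Fin n // D ij.1 = D ij.2} ≤ d) :
    Nat.card {y : SpecialLinearGroup (Fin n) F |
      A * Phi F K n y = Phi F K n y * A'} ≤ Fintype.card F ^ d := by
  classical
  let M : Matrix (Fin n) (Fin n) F →ₐ[F] Matrix (Fin n) (Fin n) K := 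
    (Algebra.ofId F K).mapMatrix
  let W : Submodule F (Matrix (Fin n) (Fin n) F) :=
    { carrier := {X | A * M X = M X * A}
      add_mem' := by
        intro a b ha hb
        simp only [Set.mem_ofPred_eq, map_add, mul_add, add_mul] at *
        rw [ha, hb]
      zero_mem' := by simp
      smul_mem' := by
        intro c x hx
        simp only [Set.mem_ofPred_eq, map_smul, mul_smul_comm, smul_mul_assoc] at *
        rw [hx] }
  have hW : Module.finrank F W ≤ d := by
    let w := Module.finBasis F W
    have hli : LinearIndependent F (fun i => (w i : Matrix (Fin n) (Fin n) F)) := 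
      w.linearIndependent.map' W.subtype (by simp)
    let ψ : Matrix (Fin n) (Fin n) F ≃ₗ[F] (Fin n × Fin n → F) :=
      (LinearEquiv.curry F F (Fin n) (Fin n)).symm
    have hli2 : LinearIndependent F (fun i => ψ (w i : Matrix (Fin n) (Fin n) F)) :=
      hli.map' ψ.toLinearMap (by simp)
    have hli3 := (linearIndependent_algebraMap_comp_iff (S := K)).2 hli2
    have hli4 : LinearIndependent K (fun i => M (w i)) := by
      have := hli3.map' (LinearEquiv.curry K K (Fin n) (Fin n)).toLinearMap (by simp)
      exact this
    let C : Matrix (Fin n) (Fin n) K →ₗ[K] ({ij : Fin n × Fin n // D ij.1 = D ij.2} → K) :=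
      { toFun := fun X ij => (T * X * S) ij.1.1 ij.1.2
        map_add' := by intro X Y; ext ij; simp [mul_add, add_mul]
        map_smul' := by intro c X; ext ij; simp }
    have hli5 : LinearIndependent K (fun i => C (M (w i))) := by
      refine hli4.map_injOn C ?_
      have key : ∀ X ∈ Submodule.span K (Set.range fun i => M (w i)), A * X = X * A := by
        intro X hX
        induction hX using Submodule.span_induction with
        | mem x h => obtain ⟨i, rfl⟩ := h; exact (w i).2
        | zero => simp
        | add x y _ _ hx hy => simp [mul_add, add_mul, hx, hy]
        | smul a x _ hx => simp [hx]
      intro X hX Y hY hXY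
      rw [SetLike.mem_coe] at hX hY
      have hZ := key _ (Submodule.sub_mem _ hX hY)
      set Z := X - Y with hZdef
      have hCZ : C Z = 0 := by rw [hZdef, map_sub, hXY, sub_self]
      have h2 : diagonal D * (T * Z * S) = (T * Z * S) * diagonal D := by
        have : T * (A * Z) * S = T * (Z * A) * S := by rw [hZ]
        rw [hA] at this
        calc diagonal D * (T * Z * S) = T * S * diagonal D * T * Z * S := by
              rw [hTS]; simp only [mul_assoc, one_mul]
          _ = T * (S * diagonal D * T * Z) * S := by simp only [mul_assoc]
          _ = T * Z * S * diagonal D * (T * S) := by rw [this]; simp only [mul_assoc]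
          _ = _ := by rw [hTS, mul_one]
      have h3 : T * Z * S = 0 := by
        ext i j
        by_cases hij : D i = D j
        · exact congrFun hCZ ⟨(i, j), hij⟩
        · have := congrFun (congrFun h2 i) j
          rw [Matrix.diagonal_mul, Matrix.mul_diagonal, mul_comm] at this
          have h4 : (T * Z * S) i j * (D i - D j) = 0 := by rw [mul_sub, this, sub_self]
          exact (mul_eq_zero.1 h4).resolve_right (sub_ne_zero.2 hij)
      have h5 : Z = 0 := by
        calc Z = (S * T) * Z * (S * T) := by rw [hST]; simp
          _ = S * (T * Z * S) * T := by simp only [mul_assoc]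
          _ = 0 := by rw [h3]; simp
      exact sub_eq_zero.1 h5
    have := hli5.fintype_card_le_finrank
    simp only [Fintype.card_fin, Module.finrank_fintype_fun_eq_card] at this
    exact this.trans hd
  have hWc : Nat.card W ≤ Fintype.card F ^ d := by
    rw [Nat.card_eq_fintype_card, Module.card_eq_pow_finrank (K := F)]
    exact Nat.pow_le_pow_right Fintype.card_pos hW
  by_cases hne : ∃ y0 : SpecialLinearGroup (Fin n) F, A * Phi F K n y0 = Phi F K n y0 * A'
  · obtain ⟨y0, hy0⟩ := hne
    refine le_trans ?_ hWc
    have hA' : Phi F K n y0⁻¹ * A = A' * Phi F K n y0⁻¹ := by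
      calc _ = Phi F K n y0⁻¹ * (A * Phi F K n y0) * Phi F K n y0⁻¹ := by
            simp only [mul_assoc, Phi_mul_inv, mul_one]
        _ = _ := by rw [hy0, ← mul_assoc, Phi_inv_mul, one_mul]
    refine Nat.card_le_card_of_injective
      (fun y => (⟨(y.1 * y0⁻¹).1, ?_⟩ : W)) ?_
    · change A * Phi F K n (y.1 * y0⁻¹) = Phi F K n (y.1 * y0⁻¹) * A
      have hy := y.2
      simp only [Set.mem_ofPred_eq] at hy
      rw [map_mul, ← mul_assoc, hy, mul_assoc, mul_assoc, hA']
    · intro y y' h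
      have := congrArg Subtype.val h
      have h2 : y.1 * y0⁻¹ = y'.1 * y0⁻¹ := Subtype.ext this
      exact Subtype.ext (mul_right_cancel h2)
  · have : IsEmpty {y : SpecialLinearGroup (Fin n) F | A * Phi F K n y = Phi F K n y * A'} :=
      ⟨fun y => hne ⟨y.1, y.2⟩⟩
    simp


theorem aux_conj_pow {K : Type*} [Field K] {n : ℕ} (S T : Matrix (Fin n) (Fin n) K)
    (D : Fin n → K) (hST : S * T = 1) (hTS : T * S = 1) (k : ℕ) :
    (S * diagonal D * T) ^ k = S * diagonal (D ^ k) * T := by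
  induction k with
  | zero => simp [hST]
  | succ k ih =>
    rw [pow_succ, ih]
    calc S * diagonal (D ^ k) * T * (S * diagonal D * T)
        = S * diagonal (D ^ k) * (T * S) * diagonal D * T := by simp only [mul_assoc]
      _ = S * (diagonal (D ^ k) * diagonal D) * T := by rw [hTS]; simp only [mul_assoc, mul_one]
      _ = _ := by rw [diagonal_mul_diagonal, pow_succ]; rfl

theorem aux_nonab {T : Type*} [Group T] [Finite T] {p : ℕ} [Fact p.Prime] (hT : IsPGroup p T)
    (h : ∃ b c : T, b * c ≠ c * b) :
    ∃ a a' z : T, z ≠ 1 ∧ z ∈ Subgroup.center T ∧ z * (a' * a) = a * a' := by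
  have hQ : IsPGroup p (T ⧸ Subgroup.center T) := hT.to_quotient _
  have hnt : Nontrivial (T ⧸ Subgroup.center T) := by
    rw [QuotientGroup.nontrivial_iff]
    intro htop
    obtain ⟨b, c, hbc⟩ := h
    have : b ∈ Subgroup.center T := by rw [htop]; trivial
    exact hbc ((Subgroup.mem_center_iff.1 this c).symm)
  have := hQ.center_nontrivial
  obtain ⟨⟨x, hx⟩, hx1⟩ := exists_ne (1 : Subgroup.center (T ⧸ Subgroup.center T))
  obtain ⟨a, rfl⟩ := QuotientGroup.mk_surjective x
  have ha : a ∉ Subgroup.center T := by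
    intro hac
    apply hx1
    apply Subtype.ext
    exact (QuotientGroup.eq_one_iff a).2 hac
  rw [Subgroup.mem_center_iff] at ha
  push Not at ha
  obtain ⟨a', ha'⟩ := ha
  refine ⟨a, a', a * a' * a⁻¹ * a'⁻¹, ?_, ?_, by group⟩
  · intro h1
    apply ha'
    have : a * a' = a' * a := by
      calc a * a' = (a * a' * a⁻¹ * a'⁻¹) * (a' * a) := by group
        _ = _ := by rw [h1, one_mul]
    exact this.symm
  · rw [← QuotientGroup.eq_one_iff]
    have := Subgroup.mem_center_iff.1 hx (a' : T ⧸ Subgroup.center T)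
    simp only [QuotientGroup.mk_mul, QuotientGroup.mk_inv]
    rw [← this]; group

theorem aux_comm {F K : Type*} [Field F] [Finite F] [Field K] [Algebra F K] [IsAlgClosed K] {n : ℕ}
    {p : ℕ} [hpf : Fact p.Prime] (hp2 : p ≠ 2) (hpK : (p : K) ≠ 0)
    (P : Subgroup (SpecialLinearGroup (Fin n) F)) (hP : IsPGroup p P)
    (b c : SpecialLinearGroup (Fin n) F) (hb : b ∈ P) (hc : c ∈ P)
    (u φ w ψ : Fin n → K) (μ κ ν ρ : K) (hφ : φ ⬝ᵥ u = 1) (hψ : ψ ⬝ᵥ w = 1)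
    (hκ : κ ≠ 0) (hρ : ρ ≠ 0)
    (hbe : Phi F K n b = μ • (1 : Matrix (Fin n) (Fin n) K) + κ • vecMulVec u φ)
    (hce : Phi F K n c = ν • (1 : Matrix (Fin n) (Fin n) K) + ρ • vecMulVec w ψ) :
    b * c = c * b := by
  classical
  by_contra hbc
  let L : Submodule K (Fin n → K) := Submodule.span K {u, w}
  have huL : u ∈ L := Submodule.subset_span (by simp)
  have hwL : w ∈ L := Submodule.subset_span (by simp)
  let T0 : Submonoid (SpecialLinearGroup (Fin n) F) :=
    { carrier := {g | g ∈ P ∧ ∃ χ : K, ∀ v, Phi F K n g *ᵥ v - χ • v ∈ L}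
      one_mem' := ⟨P.one_mem, 1, by intro v; simp⟩
      mul_mem' := by
        rintro g h ⟨hg, χ, hχ⟩ ⟨hh, χ', hχ'⟩
        refine ⟨P.mul_mem hg hh, χ * χ', fun v => ?_⟩
        have h1 := hχ (Phi F K n h *ᵥ v)
        have h2 := L.smul_mem χ (hχ' v)
        have h3 := L.add_mem h1 h2
        convert h3 using 1
        rw [map_mul, ← mulVec_mulVec, smul_sub, smul_smul]
        abel }
  let T : Subgroup (SpecialLinearGroup (Fin n) F) :=
    { T0 with
      inv_mem' := by
        intro g hg
        have h1 : g⁻¹ = g ^ (orderOf g - 1) := by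
          rw [inv_eq_iff_mul_eq_one, ← pow_succ',
            Nat.sub_add_cancel (orderOf_pos g), pow_orderOf_eq_one]
        rw [h1]
        exact T0.pow_mem hg _ }
  have hTP : T ≤ P := fun g hg => hg.1
  have hTp : IsPGroup p T := hP.to_le hTP
  have hmv : ∀ (x y v : Fin n → K), vecMulVec x y *ᵥ v = (y ⬝ᵥ v) • x := by
    intro x y v
    ext i
    simp [vecMulVec_apply, mulVec, dotProduct, Finset.mul_sum, mul_comm, mul_left_comm]
  have hbT : b ∈ T := ⟨hb, μ, fun v => by
    rw [hbe, add_mulVec, smul_mulVec, smul_mulVec, one_mulVec, hmv, add_sub_cancel_left]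
    exact L.smul_mem _ (L.smul_mem _ huL)⟩
  have hcT : c ∈ T := ⟨hc, ν, fun v => by
    rw [hce, add_mulVec, smul_mulVec, smul_mulVec, one_mulVec, hmv, add_sub_cancel_left]
    exact L.smul_mem _ (L.smul_mem _ hwL)⟩
  obtain ⟨⟨a, ha⟩, ⟨a', ha'⟩, ⟨z, hz⟩, hz1, hzc, hza⟩ := aux_nonab hTp
    ⟨⟨b, hbT⟩, ⟨c, hcT⟩, fun h => hbc (congrArg Subtype.val h)⟩
  have hz1 : z ≠ 1 := fun h => hz1 (Subtype.ext h)
  have hza2 : z * (a' * a) = a * a' := congrArg Subtype.val hza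
  clear hza
  have hzb : b * z = z * b := congrArg Subtype.val (Subgroup.mem_center_iff.1 hzc ⟨b, hbT⟩)
  have hzcc : c * z = z * c := congrArg Subtype.val (Subgroup.mem_center_iff.1 hzc ⟨c, hcT⟩)
  set Z := Phi F K n z with hZ
  -- z acts trivially modulo L
  have hzL : ∀ v, Z *ᵥ v - v ∈ L := by
    intro v
    obtain ⟨_, χ, hχ⟩ := ha
    obtain ⟨_, χ', hχ'⟩ := ha'
    set v0 := Phi F K n (a' * a)⁻¹ *ᵥ v with hv0
    have e1 : Phi F K n (a' * a) *ᵥ v0 = v := by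
      rw [hv0, mulVec_mulVec, Phi_mul_inv, one_mulVec]
    have e2 : Z *ᵥ v = Phi F K n (a * a') *ᵥ v0 := by
      rw [← hza2, map_mul _ z, ← mulVec_mulVec, e1]
    have e3 : Z *ᵥ v - v = Phi F K n (a * a') *ᵥ v0 - Phi F K n (a' * a) *ᵥ v0 := by rw [e1, e2]
    rw [e3]
    have h1 := L.add_mem (hχ (Phi F K n a' *ᵥ v0)) (L.smul_mem χ (hχ' v0))
    have h2 := L.add_mem (hχ' (Phi F K n a *ᵥ v0)) (L.smul_mem χ' (hχ v0))
    have h3 := L.sub_mem h1 h2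
    convert h3 using 1
    rw [map_mul, map_mul, ← mulVec_mulVec, ← mulVec_mulVec, smul_sub, smul_sub, smul_smul, smul_smul,
      mul_comm χ χ']
    abel
  -- rank one commutation
  have hcom : ∀ (g : SpecialLinearGroup (Fin n) F) (x y : Fin n → K) (α β : K), β ≠ 0 →
      y ⬝ᵥ x = 1 → Phi F K n g = α • (1 : Matrix (Fin n) (Fin n) K) + β • vecMulVec x y →
      g * z = z * g → ∃ θ : K, Z *ᵥ x = θ • x ∧ y ᵥ* Z = θ • y := by
    intro g x y α β hβ hyx hg hgz
    have h1 : Phi F K n g * Z = Z * Phi F K n g := by rw [hZ, ← map_mul, hgz, map_mul]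
    have h2 : vecMulVec x y * Z = Z * vecMulVec x y := by
      rw [hg] at h1
      simp only [add_mul, mul_add, smul_mul_assoc, mul_smul_comm, one_mul, mul_one] at h1
      exact smul_right_injective _ hβ (add_left_cancel h1)
    rw [vecMulVec_mul, mul_vecMulVec] at h2
    refine ⟨y ⬝ᵥ (Z *ᵥ x), ?_, ?_⟩
    · have h3 := congrArg (fun A => A *ᵥ x) h2
      simp only [hmv] at h3
      rw [hyx, one_smul] at h3
      rw [dotProduct_mulVec, h3]
    · ext j
      have h3 := congrArg (fun A => (y ᵥ* A) j) h2
      simp only [vecMul_vecMulVec, hyx] at h3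
      simpa using h3
  obtain ⟨θ, hθ1, hθ2⟩ := hcom b u φ μ κ hκ hφ hbe hzb
  obtain ⟨θ', hθ1', hθ2'⟩ := hcom c w ψ ν ρ hρ hψ hce hzcc
  by_cases hθ : θ = θ'
  swap
  · have h1 : φ ⬝ᵥ w = 0 := by
      have e1 : φ ⬝ᵥ (Z *ᵥ w) = θ' * (φ ⬝ᵥ w) := by rw [hθ1', dotProduct_smul, smul_eq_mul]
      rw [dotProduct_mulVec, hθ2, smul_dotProduct, smul_eq_mul] at e1
      have : (θ - θ') * (φ ⬝ᵥ w) = 0 := by rw [sub_mul, e1, sub_self]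
      exact (mul_eq_zero.1 this).resolve_left (sub_ne_zero.2 hθ)
    have h2 : ψ ⬝ᵥ u = 0 := by
      have e1 : ψ ⬝ᵥ (Z *ᵥ u) = θ * (ψ ⬝ᵥ u) := by rw [hθ1, dotProduct_smul, smul_eq_mul]
      rw [dotProduct_mulVec, hθ2', smul_dotProduct, smul_eq_mul] at e1
      have : (θ - θ') * (ψ ⬝ᵥ u) = 0 := by rw [sub_mul, e1, sub_self]
      exact (mul_eq_zero.1 this).resolve_left (sub_ne_zero.2 hθ)
    apply hbc
    apply Phi_inj F K n
    rw [map_mul, map_mul, hbe, hce]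
    have e1 : vecMulVec u φ * vecMulVec w ψ = 0 := by
      rw [vecMulVec_mul_vecMulVec, h1]; ext; simp [vecMulVec_apply]
    have e2 : vecMulVec w ψ * vecMulVec u φ = 0 := by
      rw [vecMulVec_mul_vecMulVec, h2]; ext; simp [vecMulVec_apply]
    simp only [add_mul, mul_add, smul_mul_assoc, mul_smul_comm, one_mul, mul_one, e1, e2, smul_zero, smul_add]
    rw [smul_comm μ ν, smul_comm μ ρ, smul_comm κ ν]
    abel
  · subst hθ
    have hl : ∀ l ∈ L, Z *ᵥ l = θ • l := by
      intro l hl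
      induction hl using Submodule.span_induction with
      | mem x h =>
        rcases h with rfl | h
        · exact hθ1
        · rw [Set.mem_singleton_iff.1 h]; exact hθ1'
      | zero => simp
      | add x y _ _ hx hy => rw [mulVec_add, hx, hy, smul_add]
      | smul a x _ hx => rw [mulVec_smul, hx, smul_comm]
    obtain ⟨k, hk⟩ := hP ⟨z, hTP hz⟩
    have hk : z ^ p ^ k = 1 := congrArg Subtype.val hk
    have hZk : Z ^ p ^ k = 1 := by rw [hZ, ← map_pow, hk, map_one]
    obtain ⟨S, R, D, hSR, hRS, hD⟩ := aux_diag Z (p ^ k) (by push_cast; exact pow_ne_zero _ hpK) hZk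
    have hDk : ∀ i, D i ^ p ^ k = 1 := by
      intro i
      rw [hD, aux_conj_pow S R D hSR hRS] at hZk
      have : diagonal (D ^ p ^ k) = 1 := by
        calc diagonal (D ^ p ^ k) = (R * S) * diagonal (D ^ p ^ k) * (R * S) := by rw [hRS]; simp
          _ = R * (S * diagonal (D ^ p ^ k) * R) * S := by simp only [mul_assoc]
          _ = 1 := by rw [hZk, mul_one, hRS]
      have := congrFun (congrFun this i) i
      simpa using this
    have hdiag : diagonal (fun i => D i - 1) = R * (Z - 1) * S := by
      have : R * (Z - 1) * S = (R * S) * diagonal D * (R * S) - R * S := by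
        rw [hD, mul_sub, sub_mul, mul_one]; simp only [mul_assoc]
      rw [this, hRS, one_mul, mul_one, ← diagonal_one, diagonal_sub]
    have hquad : (Z - 1) * (Z - 1) = (θ - 1) • (Z - 1) := by
      apply Matrix.toLin'.injective
      ext1
      ext1
      simp only [LinearMap.comp_apply, toLin'_apply]
      generalize (LinearMap.single K (fun _ : Fin n => K) _) 1 = v
      rw [← mulVec_mulVec]
      have h1 : (Z - 1) *ᵥ v ∈ L := by rw [sub_mulVec, one_mulVec]; exact hzL v
      rw [sub_mulVec _ _ ((Z - 1) *ᵥ v), hl _ h1, one_mulVec, smul_mulVec, sub_smul, one_smul]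
    have hDq : ∀ i, D i = 1 ∨ D i = θ := by
      intro i
      have : diagonal (fun i => D i - 1) * diagonal (fun i => D i - 1) =
          (θ - 1) • diagonal (fun i => D i - 1) := by
        rw [hdiag]
        calc _ = R * (Z - 1) * (S * R) * (Z - 1) * S := by simp only [mul_assoc]
          _ = R * ((Z - 1) * (Z - 1)) * S := by rw [hSR]; simp only [mul_assoc, one_mul]
          _ = _ := by rw [hquad]; simp
      have := congrFun (congrFun this i) i
      simp only [diagonal_mul_diagonal, diagonal_apply_eq, Matrix.smul_apply, smul_eq_mul] at this
      by_cases h : D i = 1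
      · left; exact h
      · right
        have := mul_right_cancel₀ (sub_ne_zero.2 h) this
        linear_combination this
    have hZ1 : ¬ ∀ i, D i = 1 := by
      intro h
      apply hz1
      apply Phi_inj F K n
      rw [map_one, ← hZ, hD]
      have : diagonal D = (1 : Matrix (Fin n) (Fin n) K) := by
        rw [← diagonal_one]; congr 1; ext i; exact h i
      rw [this, mul_one, hSR]
    push Not at hZ1
    obtain ⟨i0, hi0⟩ := hZ1
    have hθi : D i0 = θ := (hDq i0).resolve_left hi0
    have hθ1 : θ ≠ 1 := hθi ▸ hi0
    have hθk : θ ^ p ^ k = 1 := hθi ▸ hDk i0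
    have hdet : θ ^ (Finset.univ.filter (fun i => D i ≠ 1)).card = 1 := by
      have h1 : Z.det = 1 := Phi_det F K n z
      rw [hD, det_mul, det_mul, det_diagonal, mul_right_comm, ← det_mul, hSR, det_one, one_mul] at h1
      refine Eq.trans ?_ h1
      rw [← Finset.prod_const, Finset.prod_filter]
      apply Finset.prod_congr rfl
      intro i _
      rcases hDq i with h | h
      · simp [h]
      · simp [h, hθ1]
    have hcard : (Finset.univ.filter (fun i => D i ≠ 1)).card ≤ 2 := by
      have h1 : (diagonal (fun i => D i - 1)).rank = (Finset.univ.filter (fun i => D i ≠ 1)).card := by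
        rw [rank_diagonal, Fintype.card_subtype]
        congr 1
        ext i; simp [sub_eq_zero]
      rw [← h1, hdiag]
      refine (rank_mul_le_left _ _).trans ((rank_mul_le_right _ _).trans ?_)
      have h2 : LinearMap.range (Z - 1).mulVecLin ≤ L := by
        rintro _ ⟨v, rfl⟩
        rw [mulVecLin_apply, sub_mulVec, one_mulVec]
        exact hzL v
      have h3 : Module.finrank K L ≤ 2 := by
        have := finrank_span_le_card (R := K) (M := Fin n → K) ({u, w} : Set (Fin n → K))
        refine this.trans ?_
        rw [Set.toFinset_card]
        simpa using Finset.card_le_two (a := u) (b := w)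
      exact (Submodule.finrank_mono h2).trans h3
    have hpos : 0 < (Finset.univ.filter (fun i => D i ≠ 1)).card :=
      Finset.card_pos.2 ⟨i0, by simp [hi0]⟩
    have hcop : Nat.Coprime (Finset.univ.filter (fun i => D i ≠ 1)).card (p ^ k) := by
      apply Nat.Coprime.pow_right
      rw [Nat.coprime_comm, Nat.Prime.coprime_iff_not_dvd hpf.out]
      intro hdvd
      have h1 := Nat.le_of_dvd hpos hdvd
      have h2 := hpf.out.two_le
      omega
    have h1 := orderOf_dvd_of_pow_eq_one hdet
    have h2 := orderOf_dvd_of_pow_eq_one hθk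
    have h3 := Nat.dvd_gcd h1 h2
    rw [hcop] at h3
    exact hθ1 (orderOf_eq_one_iff.1 (Nat.dvd_one.1 h3))


theorem aux_fib {K : Type*} [DecidableEq K] {n : ℕ} (D : Fin n → K) :
    (∀ i j, D i = D j) ∨ (∃ i0 i1, D i0 ≠ D i1 ∧ ∀ j, j ≠ i0 → D j = D i1) ∨
    (Fintype.card {ij : Fin n × Fin n // D ij.1 = D ij.2} + 2 * n ≤ n * n ∧
      Fintype.card {ij : Fin n × Fin n // D ij.1 = D ij.2} + 4 * n ≤ n * n + 8) := by
  classical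
  let f : Fin n → ℕ := fun i => (Finset.univ.filter (fun j => D i = D j)).card
  have hsum : Fintype.card {ij : Fin n × Fin n // D ij.1 = D ij.2} = ∑ i, f i := by
    rw [Fintype.card_subtype, Finset.card_filter, Fintype.sum_prod_type]
    refine Finset.sum_congr rfl fun i _ => ?_
    simp only [f, Finset.card_filter]
  have hcompl : ∀ i, f i + (Finset.univ.filter (fun j => ¬ D i = D j)).card = n := by
    intro i
    have := Finset.card_filter_add_card_filter_not (s := (Finset.univ : Finset (Fin n))) (fun j => D i = D j)
    simpa [f] using this
  by_cases h : ∃ i, n ≤ f i + 1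
  · obtain ⟨i, hi⟩ := h
    have h1 := hcompl i
    have h2 : (Finset.univ.filter (fun j => ¬ D i = D j)).card ≤ 1 := by omega
    rcases Nat.le_one_iff_eq_zero_or_eq_one.1 h2 with h3 | h3
    · left
      have : ∀ j, D i = D j := by
        intro j
        by_contra hj
        have := Finset.card_eq_zero.1 h3
        have hm : j ∈ Finset.univ.filter (fun j => ¬ D i = D j) := by simp [hj]
        rw [this] at hm
        simp at hm
      intro a b
      rw [← this a, ← this b]
    · right; left
      obtain ⟨i0, hi0⟩ := Finset.card_eq_one.1 h3
      have key : ∀ j, ¬ D i = D j ↔ j = i0 := by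
        intro j
        have : j ∈ Finset.univ.filter (fun j => ¬ D i = D j) ↔ j ∈ ({i0} : Finset (Fin n)) := by rw [hi0]
        simpa using this
      refine ⟨i0, i, fun h => (key i0).2 rfl h.symm, fun j hj => ?_⟩
      by_contra hne
      exact hj ((key j).1 fun h => hne h.symm)
  · right; right
    push Not at h
    rw [hsum]
    constructor
    · have : ∑ i, f i + ∑ i : Fin n, 2 ≤ ∑ i : Fin n, n := by
        rw [← Finset.sum_add_distrib]
        refine Finset.sum_le_sum fun i _ => ?_
        have := h i
        omega
      simp at this
      linarith
    · by_cases hbig : ∃ i, n < 2 * f i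
      · obtain ⟨i, hi⟩ := hbig
        have hle := h i
        obtain ⟨k, hk⟩ : ∃ k, n = f i + k := ⟨n - f i, by omega⟩
        have hcc : (Finset.univ.filter (fun j => ¬ D i = D j)).card = k := by
          have := hcompl i; omega
        have hs : ∑ j, f j ≤ f i * f i + k * k := by
          rw [← Finset.sum_filter_add_sum_filter_not Finset.univ (fun j => D i = D j)]
          apply Nat.add_le_add
          · refine (Finset.sum_le_card_nsmul _ _ (f i) ?_).trans (by simp [f])
            intro j hj
            simp only [Finset.mem_filter, Finset.mem_univ, true_and] at hj
            simp [f, hj]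
          · refine (Finset.sum_le_card_nsmul _ _ k ?_).trans (by rw [hcc, smul_eq_mul])
            intro j hj
            simp only [Finset.mem_filter, Finset.mem_univ, true_and] at hj
            rw [← hcc]
            apply Finset.card_le_card
            intro l hl
            simp only [Finset.mem_filter, Finset.mem_univ, true_and] at hl ⊢
            rw [← hl]; exact hj
        generalize f i = m at *
        subst hk
        have hk2 : 2 ≤ k := by omega
        have hm2 : 2 ≤ m := by omega
        obtain ⟨k', rfl⟩ := Nat.exists_eq_add_of_le hk2
        obtain ⟨m', rfl⟩ := Nat.exists_eq_add_of_le hm2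
        nlinarith [Nat.zero_le (k' * m')]
      · push Not at hbig
        have : ∑ i, 2 * f i ≤ ∑ i : Fin n, n := Finset.sum_le_sum fun i _ => hbig i
        rw [← Finset.mul_sum] at this
        simp at this
        zify at *
        nlinarith [sq_nonneg ((n : ℤ) - 4)]

theorem aux_single {K : Type*} [Field K] {n : ℕ} (S T : Matrix (Fin n) (Fin n) K) (i0 : Fin n)
    (hTS : T * S = 1) :
    S * diagonal (Pi.single i0 1) * T = vecMulVec (fun i => S i i0) (fun j => T i0 j) ∧
      (fun j => T i0 j) ⬝ᵥ (fun i => S i i0) = 1 := by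
  constructor
  · ext i j
    rw [Matrix.mul_apply, Finset.sum_eq_single i0]
    · simp [vecMulVec_apply]
    · intro b _ hb
      simp [hb]
    · simp
  · have := congrFun (congrFun hTS i0) i0
    simpa [Matrix.mul_apply, dotProduct] using this

/-- Rank one idempotents attached to homologies in `P`. -/
def ESet (F K : Type*) [Field F] [Field K] [Algebra F K] (n : ℕ)
    (P : Subgroup (SpecialLinearGroup (Fin n) F)) : Set (Matrix (Fin n) (Fin n) K) :=
  {A | ∃ (S T : Matrix (Fin n) (Fin n) K) (i0 : Fin n), S * T = 1 ∧ T * S = 1 ∧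
    A = S * diagonal (Pi.single i0 1) * T ∧ ∃ b ∈ P, ∃ μ κ : K, κ ≠ 0 ∧
      Phi F K n b = μ • (1 : Matrix (Fin n) (Fin n) K) + κ • A}

theorem aux_E_card {F K : Type*} [Field F] [Finite F] [Field K] [Algebra F K] [IsAlgClosed K] {n : ℕ}
    {p : ℕ} [hpf : Fact p.Prime] (hp2 : p ≠ 2) (hpK : (p : K) ≠ 0)
    (P : Subgroup (SpecialLinearGroup (Fin n) F)) (hP : IsPGroup p P)
    (s : Finset (Matrix (Fin n) (Fin n) K)) (hs : ∀ A ∈ s, A ∈ ESet F K n P) : s.card ≤ n := by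
  classical
  have h1 : ∀ A : s, ∃ u φ : Fin n → K, φ ⬝ᵥ u = 1 ∧ A.1 = vecMulVec u φ := by
    intro A
    obtain ⟨S, T, i0, _, hTS, hA, _⟩ := hs A.1 A.2
    have := aux_single S T i0 hTS
    exact ⟨_, _, this.2, hA.trans this.1⟩
  choose u φ h1 hA using h1
  have h2 : ∀ A A' : s, A ≠ A' → φ A ⬝ᵥ u A' = 0 := by
    intro A A' hne
    obtain ⟨_, _, _, _, _, _, b, hb, μ, κ, hκ, hbe⟩ := hs A.1 A.2
    obtain ⟨_, _, _, _, _, _, c, hc, ν, ρ, hρ, hce⟩ := hs A'.1 A'.2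
    have hbc : b * c = c * b := aux_comm hp2 hpK P hP b c hb hc (u A) (φ A) (u A') (φ A') μ κ ν ρ
      (h1 A) (h1 A') hκ hρ (by rw [hbe, hA A]) (by rw [hce, hA A'])
    have hc2 : A.1 * A'.1 = A'.1 * A.1 := by
      have h3 := congrArg (Phi F K n) hbc
      rw [map_mul, map_mul, hbe, hce] at h3
      simp only [add_mul, mul_add, smul_mul_assoc, mul_smul_comm, one_mul, mul_one, smul_add] at h3
      rw [smul_comm ν μ, smul_comm κ ν, smul_comm μ ρ, smul_comm κ ρ] at h3
      have h4 : ρ • κ • (A.1 * A'.1) = ρ • κ • (A'.1 * A.1) := by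
        have e : ∀ a b c d d' : Matrix (Fin n) (Fin n) K, a + b + (c + d) = a + c + (b + d') → d = d' := by
          intro a b c d d' h
          have : a + b + c + d = a + b + c + d' := by
            rw [add_assoc (a + b) c d, h]; abel
          exact add_left_cancel this
        exact e _ _ _ _ _ h3
      exact smul_right_injective _ hκ (smul_right_injective _ hρ h4)
    by_contra ht
    apply hne
    apply Subtype.ext
    rw [hA A, hA A', vecMulVec_mul_vecMulVec, vecMulVec_mul_vecMulVec] at hc2
    have e1 : u A = (φ A' ⬝ᵥ u A) • u A' := by
      have h3 := congrArg (fun M => M *ᵥ u A') hc2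
      simp only [vecMulVec_mulVec, smul_dotProduct, h1] at h3
      ext i
      have h4 := congrFun h3 i
      simp at h4
      have : φ A ⬝ᵥ u A' * (u A i) = φ A ⬝ᵥ u A' * ((φ A' ⬝ᵥ u A) * u A' i) := by
        linear_combination h4
      exact mul_left_cancel₀ ht this
    have e2 : φ A' = (φ A' ⬝ᵥ u A) • φ A := by
      have h3 := congrArg (fun M => φ A ᵥ* M) hc2
      simp only [vecMul_vecMulVec, h1] at h3
      ext i
      have h4 := congrFun h3 i
      simp at h4
      exact h4.resolve_right ht
    rw [hA A, hA A']
    ext i j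
    have e1i := congrFun e1 i
    have e2j := congrFun e2 j
    simp only [Pi.smul_apply, smul_eq_mul] at e1i e2j
    rw [vecMulVec_apply, vecMulVec_apply, e1i, e2j]
    ring
  let X : Matrix s (Fin n) K := fun A j => φ A j
  let Y : Matrix (Fin n) s K := fun j A => u A j
  have hXY : X * Y = 1 := by
    ext A A'
    have : (X * Y) A A' = φ A ⬝ᵥ u A' := rfl
    rw [this]
    by_cases h : A = A'
    · subst h; simp [h1]
    · rw [h2 A A' h, Matrix.one_apply_ne h]
  have hr := rank_mul_le_left X Y
  rw [hXY, rank_one] at hr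
  have := hr.trans (rank_le_card_width X)
  simpa using this


theorem aux_E_fin {F K : Type*} [Field F] [Finite F] [Field K] [Algebra F K] [IsAlgClosed K] {n : ℕ}
    {p : ℕ} [hpf : Fact p.Prime] (hp2 : p ≠ 2) (hpK : (p : K) ≠ 0)
    (P : Subgroup (SpecialLinearGroup (Fin n) F)) (hP : IsPGroup p P) :
    ∃ s : Finset (Matrix (Fin n) (Fin n) K), s.card ≤ n ∧ ∀ A, A ∈ s ↔ A ∈ ESet F K n P := by
  have hf : (ESet F K n P).Finite := by
    by_contra h
    obtain ⟨t, ht, hc⟩ := Set.Infinite.exists_subset_card_eq h (n + 1)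
    have := aux_E_card hp2 hpK P hP t (fun A hA => ht hA)
    omega
  refine ⟨hf.toFinset, aux_E_card hp2 hpK P hP _ (fun A hA => by simpa using hA), by simp⟩

theorem aux_single_card {K : Type*} [Field K] [DecidableEq K] {n : ℕ} (i0 : Fin n) :
    Fintype.card {ij : Fin n × Fin n //
      (Pi.single i0 1 : Fin n → K) ij.1 = (Pi.single i0 1 : Fin n → K) ij.2} ≤
      (n - 1) * (n - 1) + 1 := by
  classical
  rw [Fintype.card_subtype]
  have : (Finset.univ.filter fun ij : Fin n × Fin n =>
      (Pi.single i0 1 : Fin n → K) ij.1 = (Pi.single i0 1 : Fin n → K) ij.2) ⊆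
      ((Finset.univ.erase i0) ×ˢ (Finset.univ.erase i0)) ∪ {(i0, i0)} := by
    rintro ⟨i, j⟩ h
    simp only [Finset.mem_filter, Finset.mem_univ, true_and, Pi.single_apply] at h
    by_cases hi : i = i0 <;> by_cases hj : j = i0 <;> simp_all
  refine (Finset.card_le_card this).trans ((Finset.card_union_le _ _).trans ?_)
  simp [Finset.card_product]

theorem bad_count {F K : Type*} [Field F] [Fintype F] [Field K] [Algebra F K] [IsAlgClosed K] {n : ℕ}
    {p : ℕ} [hpf : Fact p.Prime] (hp2 : p ≠ 2) (hpK : (p : K) ≠ 0)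
    (P : Subgroup (SpecialLinearGroup (Fin n) F)) (hP : IsPGroup p P) (d : ℕ)
    (hd : n * n ≤ d + 2 * n ∨ n * n + 8 ≤ d + 4 * n) :
    Nat.card {y : SpecialLinearGroup (Fin n) F | ∃ b ∈ P, ∃ c ∈ P,
      b ∉ Subgroup.center (SpecialLinearGroup (Fin n) F) ∧ b * y = y * c} ≤
    n * n * Fintype.card F ^ ((n - 1) * (n - 1) + 1) +
      Nat.card P * Nat.card P * Fintype.card F ^ d := by
  classical
  obtain ⟨s, hs, hsE⟩ := aux_E_fin (K := K) hp2 hpK P hP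
  have : Fintype (SpecialLinearGroup (Fin n) F) := Fintype.ofFinite _
  let Pf : Finset (SpecialLinearGroup (Fin n) F) := Finset.univ.filter (· ∈ P)
  have hPf : Pf.card = Nat.card P := by
    rw [Nat.card_eq_fintype_card, Fintype.card_subtype]
  let U (A A' : Matrix (Fin n) (Fin n) K) : Finset (SpecialLinearGroup (Fin n) F) :=
    Finset.univ.filter fun y => A * Phi F K n y = Phi F K n y * A'
  have hU : ∀ A A', (U A A').card = Nat.card {y : SpecialLinearGroup (Fin n) F |
      A * Phi F K n y = Phi F K n y * A'} := by
    intro A A'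
    rw [Nat.card_eq_fintype_card]
    exact (Fintype.card_subtype _).symm
  let good (b : SpecialLinearGroup (Fin n) F) : Prop := ∃ (S T : Matrix (Fin n) (Fin n) K)
    (D : Fin n → K), S * T = 1 ∧ T * S = 1 ∧ Phi F K n b = S * diagonal D * T ∧
      Fintype.card {ij : Fin n × Fin n // D ij.1 = D ij.2} ≤ d
  let W : Finset (SpecialLinearGroup (Fin n) F) :=
    ((s ×ˢ s).biUnion fun x => U x.1 x.2) ∪ (((Pf.filter good) ×ˢ Pf).biUnion fun x =>
      U (Phi F K n x.1) (Phi F K n x.2))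
  have hW : W.card ≤ n * n * Fintype.card F ^ ((n - 1) * (n - 1) + 1) +
      Nat.card P * Nat.card P * Fintype.card F ^ d := by
    refine (Finset.card_union_le _ _).trans (Nat.add_le_add ?_ ?_)
    · refine (Finset.card_biUnion_le_card_mul _ _ (Fintype.card F ^ ((n - 1) * (n - 1) + 1)) ?_).trans ?_
      · rintro ⟨A, A'⟩ hx
        rw [Finset.mem_product] at hx
        obtain ⟨S, T, i0, hST, hTS, hA, _⟩ := (hsE A).1 hx.1
        rw [hU]
        exact aux_count A A' S T _ hST hTS hA _ (aux_single_card i0)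
      · rw [Finset.card_product]
        gcongr
    · refine (Finset.card_biUnion_le_card_mul _ _ (Fintype.card F ^ d) ?_).trans ?_
      · rintro ⟨b, c⟩ hx
        rw [Finset.mem_product, Finset.mem_filter] at hx
        obtain ⟨S, T, D, hST, hTS, hA, hD⟩ := hx.1.2
        rw [hU]
        exact aux_count _ _ S T _ hST hTS hA _ hD
      · rw [Finset.card_product]
        gcongr
        · rw [← hPf]; exact Finset.card_filter_le _ _
        · exact hPf.le
  refine le_trans ?_ hW
  have hWc : Nat.card (W : Set (SpecialLinearGroup (Fin n) F)) = W.card := by simp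
  rw [← hWc]
  refine Nat.card_mono (Set.toFinite _) ?_
  rintro y ⟨b, hb, c, hc, hbz, hby⟩
  have hby' : Phi F K n b * Phi F K n y = Phi F K n y * Phi F K n c := by
    rw [← map_mul, hby, map_mul]
  obtain ⟨k, hk⟩ := hP ⟨b, hb⟩
  have hk' : b ^ p ^ k = 1 := by simpa using congrArg Subtype.val hk
  obtain ⟨S, T, D, hST, hTS, hA⟩ := aux_diag (Phi F K n b) (p ^ k) (by push_cast; exact pow_ne_zero _ hpK)
    (by rw [← map_pow, hk', map_one])
  rcases aux_fib D with h | ⟨i0, i1, hne, h⟩ | h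
  · exfalso
    apply hbz
    rw [Subgroup.mem_center_iff]
    intro g
    apply Phi_inj F K n
    rw [map_mul, map_mul]
    rcases isEmpty_or_nonempty (Fin n) with he | ⟨⟨i⟩⟩
    · exact Subsingleton.elim _ _
    · have : diagonal D = D i • (1 : Matrix (Fin n) (Fin n) K) := by
        rw [smul_one_eq_diagonal]; congr 1; ext j; exact h j i
      rw [hA, this]
      simp [hST]
  · have hD : diagonal D = D i1 • (1 : Matrix (Fin n) (Fin n) K) +
        (D i0 - D i1) • diagonal (Pi.single i0 1) := by
      rw [smul_one_eq_diagonal, ← diagonal_smul, diagonal_add]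
      congr 1; ext j
      by_cases hj : j = i0
      · subst hj; simp
      · simp [hj, h j hj]
    set A := S * diagonal (Pi.single i0 1) * T with hAd
    have hbe : Phi F K n b = D i1 • (1 : Matrix (Fin n) (Fin n) K) + (D i0 - D i1) • A := by
      rw [hA, hD, hAd, mul_add, add_mul]
      simp [hST]
    have hκ : D i0 - D i1 ≠ 0 := sub_ne_zero.2 hne
    have hAE : A ∈ ESet F K n P := ⟨S, T, i0, hST, hTS, hAd, b, hb, _, _, hκ, hbe⟩
    let A' := Phi F K n y⁻¹ * A * Phi F K n y
    have h1 := Phi_mul_inv F K n y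
    have h2 := Phi_inv_mul F K n y
    have hce : Phi F K n c = D i1 • (1 : Matrix (Fin n) (Fin n) K) + (D i0 - D i1) • A' := by
      have : Phi F K n c = Phi F K n y⁻¹ * (Phi F K n b * Phi F K n y) := by
        rw [hby', ← mul_assoc, h2, one_mul]
      rw [this, hbe, add_mul, mul_add]
      simp [A', h2, mul_assoc]
    have hA'E : A' ∈ ESet F K n P := by
      refine ⟨Phi F K n y⁻¹ * S, T * Phi F K n y, i0, ?_, ?_, ?_, c, hc, _, _, hκ, hce⟩
      · rw [mul_assoc, ← mul_assoc S, hST, one_mul, h2]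
      · rw [mul_assoc, ← mul_assoc (Phi F K n y), h1, one_mul, hTS]
      · simp only [A', hAd, mul_assoc]
    rw [Finset.mem_coe, Finset.mem_union]
    left
    rw [Finset.mem_biUnion]
    refine ⟨(A, A'), Finset.mem_product.2 ⟨(hsE _).2 hAE, (hsE _).2 hA'E⟩, ?_⟩
    simp only [U, Finset.mem_filter, Finset.mem_univ, true_and, A']
    clear_value A
    rw [← mul_assoc, ← mul_assoc, h1, one_mul]
  · rw [Finset.mem_coe, Finset.mem_union]
    right
    rw [Finset.mem_biUnion]
    refine ⟨(b, c), Finset.mem_product.2 ⟨Finset.mem_filter.2 ⟨by simp [Pf, hb], S, T, D, hST, hTS, hA, ?_⟩, by simp [Pf, hc]⟩, ?_⟩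
    · omega
    · simpa [U] using hby'


theorem aux_dvd_iff {p : ℕ} [Fact p.Prime] {q : ℕ} (hq : 2 ≤ q) (i : ℕ) :
    p ∣ q ^ i - 1 ↔ orderOf (q : ZMod p) ∣ i := by
  rw [orderOf_dvd_iff_pow_eq_one, ← ZMod.natCast_eq_zero_iff, Nat.cast_sub (Nat.one_le_pow _ _ (by omega))]
  push_cast
  exact sub_eq_zero

theorem aux_val {p : ℕ} [Fact p.Prime] (hp : Odd p) {q : ℕ} (hq : 2 ≤ q) (hpq : ¬ p ∣ q) 
    (e : ℕ) (he : e = orderOf (q : ZMod p)) (he0 : 0 < e) (n : ℕ) :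
    padicValNat p (∏ i ∈ Finset.range n, (q ^ (i + 1) - 1)) =
      (n / e) * padicValNat p (q ^ e - 1) + padicValNat p (n / e).factorial := by
  have hpos : ∀ i, 1 < q ^ (i + 1) := fun i => Nat.one_lt_pow (by omega) (by omega)
  induction n with
  | zero => simp
  | succ n ih =>
    rw [Finset.prod_range_succ, padicValNat.mul (Finset.prod_ne_zero_iff.2 fun i _ => by have := hpos i; omega)
      (by have := hpos n; omega), ih, Nat.succ_div]
    split_ifs with h
    · obtain ⟨j, hj⟩ := h
      have hj' : n / e + 1 = j := by
        have := Nat.succ_div (a := n) (b := e)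
        rw [if_pos ⟨j, hj⟩, hj, Nat.mul_div_cancel_left _ he0] at this
        exact this.symm
      have h1 := padicValNat.pow_sub_pow (p := p) hp (x := q ^ e) (y := 1) (Nat.one_lt_pow (by omega) (by omega))
        ((aux_dvd_iff hq e).2 (by rw [he])) (fun h => hpq ((Fact.out : p.Prime).dvd_of_dvd_pow h))
        (n := n / e + 1) (Nat.succ_ne_zero _)
      rw [one_pow, ← pow_mul, hj', ← hj] at h1
      rw [h1, Nat.factorial_succ, padicValNat.mul (Nat.succ_ne_zero _) (Nat.factorial_ne_zero _), hj', ← hj']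
      ring
    · rw [padicValNat.eq_zero_of_not_dvd (n := q ^ (n + 1) - 1)]
      · simp
      · rw [aux_dvd_iff hq, ← he]; exact h

theorem aux_fac {p : ℕ} [Fact p.Prime] (hp3 : 3 ≤ p) (m : ℕ) :
    (p ^ padicValNat p m.factorial) ^ 2 ≤ 3 ^ m := by
  have h1 := sub_one_mul_padicValNat_factorial (p := p) m
  have h2 : (p - 1) * padicValNat p m.factorial ≤ m := by omega
  have h3 : ∀ k, (k + 3) ^ 2 ≤ 3 ^ (k + 2) := by
    intro k
    induction k with
    | zero => norm_num
    | succ k ih => rw [show k + 1 + 2 = (k + 2) + 1 by omega, pow_succ 3]; nlinarith [Nat.zero_le (k * k)]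
  have h4 : p ^ 2 ≤ 3 ^ (p - 1) := by
    obtain ⟨k, rfl⟩ := Nat.exists_eq_add_of_le' hp3
    exact h3 k
  calc (p ^ padicValNat p m.factorial) ^ 2 = (p ^ 2) ^ padicValNat p m.factorial := by
        rw [← pow_mul, ← pow_mul, mul_comm]
    _ ≤ (3 ^ (p - 1)) ^ padicValNat p m.factorial := Nat.pow_le_pow_left h4 _
    _ = 3 ^ ((p - 1) * padicValNat p m.factorial) := by rw [← pow_mul]
    _ ≤ _ := Nat.pow_le_pow_right (by norm_num) h2

theorem aux_pbound {p : ℕ} [Fact p.Prime] (hp2 : p ≠ 2) {q : ℕ} (hq : 2 ≤ q) (hpq : ¬ p ∣ q) (n : ℕ)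
    (hn : 2 ≤ n) (v : ℕ) (hv : p ^ v * (q - 1) ∣ ∏ i ∈ Finset.range n, (q ^ (i + 1) - 1)) :
    2 ^ n * (p ^ v) ^ 2 ≤ 7 ^ n * q ^ (2 * n - 2) := by
  have hpp : p.Prime := Fact.out
  have hodd : Odd p := hpp.odd_of_ne_two hp2
  have hp3 : 3 ≤ p := by have := hpp.two_le; omega
  set e := orderOf (q : ZMod p) with he
  have hqz : (q : ZMod p) ≠ 0 := by
    rw [Ne, ZMod.natCast_eq_zero_iff]; exact hpq
  have he0 : 0 < e := by
    rw [he, orderOf_pos_iff, isOfFinOrder_iff_pow_eq_one]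
    exact ⟨p - 1, by omega, ZMod.pow_card_sub_one_eq_one hqz⟩
  have hpos : ∀ i, 1 < q ^ (i + 1) := fun i => Nat.one_lt_pow (by omega) (by omega)
  have hne : ∏ i ∈ Finset.range n, (q ^ (i + 1) - 1) ≠ 0 :=
    Finset.prod_ne_zero_iff.2 fun i _ => by have := hpos i; omega
  have h1 := padicValNat_dvd_iff_le (p := p) hne (n := v + padicValNat p (q - 1))
  have h2 : v + padicValNat p (q - 1) ≤ padicValNat p (∏ i ∈ Finset.range n, (q ^ (i + 1) - 1)) := by
    rw [← h1, pow_add]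
    exact (mul_dvd_mul_left _ pow_padicValNat_dvd).trans hv
  rw [aux_val hodd hq hpq e he he0 n] at h2
  have h72 : (2:ℕ) ^ n * 3 ^ n ≤ 7 ^ n := by
    rw [← mul_pow]; exact Nat.pow_le_pow_left (by norm_num) _
  by_cases he1 : e = 1
  · rw [he1] at h2
    simp only [pow_one, Nat.div_one] at h2
    set a := padicValNat p (q - 1)
    have ha : p ^ a ≤ q := (Nat.le_of_dvd (by omega) pow_padicValNat_dvd).trans (by omega)
    have hv' : v ≤ (n - 1) * a + padicValNat p n.factorial := by
      obtain ⟨k, rfl⟩ := Nat.exists_eq_add_of_le' hn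
      have : (k + 2) * a = (k + 2 - 1) * a + a := by
        rw [show k + 2 - 1 = k + 1 by omega]; ring
      omega
    have h3 : (p ^ v) ^ 2 ≤ q ^ (2 * n - 2) * 3 ^ n := by
      calc (p ^ v) ^ 2 ≤ (p ^ ((n - 1) * a + padicValNat p n.factorial)) ^ 2 := by
            gcongr; omega
        _ = (p ^ a) ^ (2 * n - 2) * (p ^ padicValNat p n.factorial) ^ 2 := by
            rw [show 2 * n - 2 = (n - 1) * 2 by omega, pow_add, mul_pow, ← pow_mul, ← pow_mul, ← pow_mul]
            ring_nf
        _ ≤ _ := Nat.mul_le_mul (Nat.pow_le_pow_left ha _) (aux_fac hp3 n)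
    calc 2 ^ n * (p ^ v) ^ 2 ≤ 2 ^ n * (q ^ (2 * n - 2) * 3 ^ n) := Nat.mul_le_mul_left _ h3
      _ = (2 ^ n * 3 ^ n) * q ^ (2 * n - 2) := by ring
      _ ≤ _ := Nat.mul_le_mul_right _ h72
  · have he2 : 2 ≤ e := by omega
    set a := padicValNat p (q ^ e - 1)
    set m := n / e
    have ha : p ^ a ≤ 2 * q ^ (e - 1) := by
      have hg : (∑ i ∈ Finset.range e, q ^ i) * (q - 1) = q ^ e - 1 := by
        have := Nat.geomSum_eq hq e
        rw [this]
        exact Nat.div_mul_cancel (by simpa using Nat.sub_dvd_pow_sub_pow q 1 e)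
      have hcop : Nat.Coprime (p ^ a) (q - 1) := by
        apply Nat.Coprime.pow_left
        rw [hpp.coprime_iff_not_dvd]
        intro hdvd
        have := (aux_dvd_iff (p := p) hq 1).1 (by simpa using hdvd)
        rw [← he, Nat.dvd_one] at this
        exact he1 this
      have hd : p ^ a ∣ (∑ i ∈ Finset.range e, q ^ i) :=
        hcop.dvd_of_dvd_mul_right (by rw [hg]; exact pow_padicValNat_dvd)
      have hspos : 0 < ∑ i ∈ Finset.range e, q ^ i :=
        Finset.sum_pos (fun i _ => by positivity) ⟨0, by simp; omega⟩
      refine (Nat.le_of_dvd hspos hd).trans ?_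
      have h5 : ∀ k, ∑ i ∈ Finset.range (k + 1), q ^ i ≤ 2 * q ^ k := by
        intro k
        induction k with
        | zero => simp
        | succ k ih =>
          rw [Finset.sum_range_succ, pow_succ]
          have : 1 ≤ q ^ k := Nat.one_le_pow _ _ (by omega)
          nlinarith
      have := h5 (e - 1)
      rwa [show e - 1 + 1 = e by omega] at this
    have hv' : v ≤ m * a + padicValNat p m.factorial := by omega
    have hme : m * e ≤ n := Nat.div_mul_le_self n e
    have h2m : m * 2 ≤ n := (Nat.mul_le_mul_left m he2).trans hme
    have h3 : (p ^ v) ^ 2 ≤ 12 ^ m * q ^ (2 * ((e - 1) * m)) := by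
      calc (p ^ v) ^ 2 ≤ (p ^ (m * a + padicValNat p m.factorial)) ^ 2 := by
            gcongr; omega
        _ = ((p ^ a) ^ m) ^ 2 * (p ^ padicValNat p m.factorial) ^ 2 := by
            rw [pow_add, mul_pow, ← pow_mul p a m, mul_comm a m]
        _ ≤ ((2 * q ^ (e - 1)) ^ m) ^ 2 * 3 ^ m :=
            Nat.mul_le_mul (Nat.pow_le_pow_left (Nat.pow_le_pow_left ha _) _) (aux_fac hp3 m)
        _ = _ := by
            rw [mul_pow, mul_pow, ← pow_mul q, ← pow_mul q, show (12:ℕ) = 2 ^ 2 * 3 by norm_num, mul_pow,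
              ← pow_mul, ← pow_mul]
            ring_nf
    have h4 : q ^ (2 * ((e - 1) * m)) ≤ q ^ (2 * n - 2) := by
      apply Nat.pow_le_pow_right (by omega)
      rcases Nat.eq_zero_or_pos m with h | h
      · simp [h]
      · have : (e - 1) * m + m = m * e := by
          obtain ⟨k, hk⟩ := Nat.exists_eq_add_of_le' he2
          rw [hk, show k + 2 - 1 = k + 1 by omega]; ring
        omega
    have h5 : 2 ^ n * 12 ^ m ≤ 7 ^ n := by
      obtain ⟨t, ht⟩ := Nat.exists_eq_add_of_le h2m
      rw [ht, pow_add, pow_add, mul_comm m 2, pow_mul, pow_mul]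
      calc (2 ^ 2) ^ m * 2 ^ t * 12 ^ m = (48 ^ m) * 2 ^ t := by
            rw [show (48:ℕ) = 2 ^ 2 * 12 by norm_num, mul_pow]; ring
        _ ≤ (7 ^ 2) ^ m * 7 ^ t := Nat.mul_le_mul (Nat.pow_le_pow_left (by norm_num) _) (Nat.pow_le_pow_left (by norm_num) _)
    calc 2 ^ n * (p ^ v) ^ 2 ≤ 2 ^ n * (12 ^ m * q ^ (2 * n - 2)) :=
          Nat.mul_le_mul_left _ (h3.trans (Nat.mul_le_mul_left _ h4))
      _ = (2 ^ n * 12 ^ m) * q ^ (2 * n - 2) := by ring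
      _ ≤ _ := Nat.mul_le_mul_right _ h5


theorem card_SL_mul {F : Type*} [Field F] [Fintype F] {n : ℕ} (hn : 0 < n) :
    Nat.card (SpecialLinearGroup (Fin n) F) * (Fintype.card F - 1) = 
      ∏ i : Fin n, (Fintype.card F ^ n - Fintype.card F ^ (i : ℕ)) := by
  classical
  have : Nonempty (Fin n) := ⟨⟨0, hn⟩⟩
  rw [← Matrix.card_GL_field]
  let f : GL (Fin n) F →* Fˣ := GeneralLinearGroup.det
  have h1 := Subgroup.card_eq_card_quotient_mul_card_subgroup f.ker
  have h2 : Nat.card (GL (Fin n) F ⧸ f.ker) = Fintype.card F - 1 := by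
    rw [Nat.card_congr (QuotientGroup.quotientKerEquivOfSurjective f
      GeneralLinearGroup.det_surjective).toEquiv, Nat.card_units, Nat.card_eq_fintype_card]
  have h3 : Nat.card f.ker = Nat.card (SpecialLinearGroup (Fin n) F) := by
    symm
    let g : SpecialLinearGroup (Fin n) F → f.ker := fun x =>
      ⟨SpecialLinearGroup.toGL x, by rw [MonoidHom.mem_ker]; apply Units.ext; exact x.2⟩
    apply Nat.card_congr (Equiv.ofBijective g ⟨?_, ?_⟩)
    · intro x y h
      exact SpecialLinearGroup.toGL_injective (congrArg Subtype.val h)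
    · rintro ⟨x, hx⟩
      refine ⟨⟨x.1, ?_⟩, ?_⟩
      · have := congrArg Units.val (MonoidHom.mem_ker.1 hx)
        exact this
      · apply Subtype.ext
        apply Units.ext
        rfl
  rw [h1, h2, h3, mul_comm]

theorem prod_GL (q n : ℕ) : ∏ i : Fin n, (q ^ n - q ^ (i : ℕ)) =
    q ^ (∑ i ∈ Finset.range n, i) * ∏ i ∈ Finset.range n, (q ^ (i + 1) - 1) := by
  rw [Fin.prod_univ_eq_prod_range (fun i => q ^ n - q ^ i) n, ← Finset.prod_pow_eq_pow_sum,
    ← Finset.prod_range_reflect (fun i => q ^ (i + 1) - 1), ← Finset.prod_mul_distrib]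
  refine Finset.prod_congr rfl fun i hi => ?_
  rw [Finset.mem_range] at hi
  rw [Nat.mul_sub, ← pow_add, mul_one]
  congr 2
  omega

theorem prod_lower (q : ℕ) (hq : 2 ≤ q) (k : ℕ) :
    (1 / 4 + (1 / 2 : ℝ) ^ (k + 2)) * (q : ℝ) ^ (∑ i ∈ Finset.range (k + 1), (i + 1)) ≤
      ((∏ i ∈ Finset.range (k + 1), (q ^ (i + 1) - 1) : ℕ) : ℝ) := by
  have hq' : (2 : ℝ) ≤ q := by exact_mod_cast hq
  induction k with
  | zero => 
    simp [Nat.cast_sub (show 1 ≤ q by omega)]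
    linarith
  | succ k ih =>
    rw [Finset.sum_range_succ, Finset.prod_range_succ, pow_add (q : ℝ), Nat.cast_mul, 
      Nat.cast_sub (Nat.one_le_pow _ _ (by omega))]
    push_cast
    have h1 : (1 : ℝ) ≤ (1 / 2) ^ (k + 2) * (q : ℝ) ^ (k + 1 + 1) := by
      rw [← mul_pow]; apply one_le_pow₀; linarith
    have h2 : (1 - (1 / 2 : ℝ) ^ (k + 2)) * (q : ℝ) ^ (k + 1 + 1) ≤ (q : ℝ) ^ (k + 1 + 1) - 1 := by
      linarith
    have h3 : ((1 / 2 : ℝ) ^ (k + 2)) ≤ 1 / 4 := by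
      rw [pow_add]
      have : (1 / 2 : ℝ) ^ k ≤ 1 := pow_le_one₀ (by norm_num) (by norm_num)
      linarith
    have h0 : (0 : ℝ) ≤ (1 / 2 : ℝ) ^ (k + 2) := by positivity
    have h4 : (1 / 4 + (1 / 2 : ℝ) ^ (k + 1 + 2)) ≤ 
        (1 / 4 + (1 / 2 : ℝ) ^ (k + 2)) * (1 - (1 / 2 : ℝ) ^ (k + 2)) := by
      rw [show k + 1 + 2 = (k + 2) + 1 by omega, pow_succ _ (k + 2)]
      nlinarith
    push_cast at ih
    have h5 := mul_le_mul ih h2 (mul_nonneg (by linarith) (by positivity)) 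
      (Finset.prod_nonneg fun i _ => Nat.cast_nonneg _)
    refine le_trans ?_ h5
    have h6 : 0 ≤ (q : ℝ) ^ (∑ i ∈ Finset.range (k + 1), (i + 1)) * (q : ℝ) ^ (k + 1 + 1) := by positivity
    have h7 := mul_le_mul_of_nonneg_right h4 h6
    linarith

theorem card_SL_lower {F : Type*} [Field F] [Fintype F] {n : ℕ} (hn : 0 < n) :
    Fintype.card F ^ (n * n) ≤ 4 * Fintype.card F * Nat.card (SpecialLinearGroup (Fin n) F) := by
  have hq : 2 ≤ Fintype.card F := Fintype.one_lt_card
  have h1 := card_SL_mul (F := F) hn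
  rw [prod_GL] at h1
  obtain ⟨k, rfl⟩ : ∃ k, n = k + 1 := ⟨n - 1, by omega⟩
  have h2 := prod_lower _ hq k
  set q := Fintype.card F
  have h3 : (1 / 4 : ℝ) * (q : ℝ) ^ (∑ i ∈ Finset.range (k + 1), (i + 1)) ≤
      ((∏ i ∈ Finset.range (k + 1), (q ^ (i + 1) - 1) : ℕ) : ℝ) := by
    refine le_trans (mul_le_mul_of_nonneg_right ?_ (by positivity)) h2
    have : (0 : ℝ) ≤ (1 / 2 : ℝ) ^ (k + 2) := by positivity
    linarith
  have h4 : q ^ (∑ i ∈ Finset.range (k + 1), (i + 1)) ≤ 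
      4 * ∏ i ∈ Finset.range (k + 1), (q ^ (i + 1) - 1) := by
    have : (q : ℝ) ^ (∑ i ∈ Finset.range (k + 1), (i + 1)) ≤ 
      4 * ((∏ i ∈ Finset.range (k + 1), (q ^ (i + 1) - 1) : ℕ) : ℝ) := by linarith
    exact_mod_cast this
  have h5 : (∑ i ∈ Finset.range (k + 1), i) + (∑ i ∈ Finset.range (k + 1), (i + 1)) = (k + 1) * (k + 1) := by
    rw [Finset.sum_add_distrib]
    have := Finset.sum_range_id_mul_two (k + 1)
    simp at this ⊢
    nlinarith
  calc q ^ ((k + 1) * (k + 1)) = q ^ (∑ i ∈ Finset.range (k + 1), i) * q ^ (∑ i ∈ Finset.range (k + 1), (i + 1)) := by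
        rw [← h5, pow_add]
    _ ≤ q ^ (∑ i ∈ Finset.range (k + 1), i) * (4 * ∏ i ∈ Finset.range (k + 1), (q ^ (i + 1) - 1)) :=
        Nat.mul_le_mul_left _ h4
    _ = 4 * (Nat.card (SpecialLinearGroup (Fin (k + 1)) F) * (q - 1)) := by rw [h1]; ring
    _ ≤ 4 * (Nat.card (SpecialLinearGroup (Fin (k + 1)) F) * q) := by gcongr; omega
    _ = _ := by ring

theorem card_SL_upper {F : Type*} [Field F] [Fintype F] {n : ℕ} :
    Nat.card (SpecialLinearGroup (Fin n) F) ≤ Fintype.card F ^ (n * n) := by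
  classical
  have : Nat.card (SpecialLinearGroup (Fin n) F) ≤ Nat.card (Matrix (Fin n) (Fin n) F) :=
    Nat.card_le_card_of_injective (fun x => x.1) Subtype.val_injective
  refine this.trans ?_
  rw [Nat.card_eq_fintype_card]
  have h2 : Fintype.card (Matrix (Fin n) (Fin n) F) = Fintype.card (Fin n → Fin n → F) :=
    Fintype.card_congr (Equiv.refl _)
  rw [h2, Fintype.card_fun, Fintype.card_fun, ← pow_mul, Fintype.card_fin]

theorem P_bound {F : Type*} [Field F] [Fintype F] {n : ℕ} (hn : 2 ≤ n) {p : ℕ} [Fact p.Prime] (hp2 : p ≠ 2)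
    (hpq : ¬ p ∣ Fintype.card F) (P : Subgroup (SpecialLinearGroup (Fin n) F)) (hP : IsPGroup p P) :
    2 ^ n * Nat.card P ^ 2 ≤ 7 ^ n * Fintype.card F ^ (2 * n - 2) := by
  obtain ⟨v, hv⟩ := IsPGroup.iff_card.1 hP
  have hq : 2 ≤ Fintype.card F := Fintype.one_lt_card
  have hpp : p.Prime := Fact.out
  rw [hv]
  apply aux_pbound hp2 hq hpq n hn v
  have h1 : p ^ v * (Fintype.card F - 1) ∣ ∏ i : Fin n, (Fintype.card F ^ n - Fintype.card F ^ (i : ℕ)) := by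
    rw [← card_SL_mul (by omega), ← hv]
    exact mul_dvd_mul_right (Subgroup.card_subgroup_dvd_card P) _
  rw [prod_GL] at h1
  refine Nat.Coprime.dvd_of_dvd_mul_left ?_ h1
  apply Nat.Coprime.pow_right
  apply Nat.Coprime.mul_left
  · exact Nat.Coprime.pow_left _ ((hpp.coprime_iff_not_dvd).2 hpq)
  · exact (Nat.coprime_self_sub_left (by omega)).2 (Nat.coprime_one_left _)


theorem quot_red {G : Type*} [Group G] [Finite G] {p : ℕ} [Fact p.Prime]
    (H : Sylow p (G ⧸ Subgroup.center G)) :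
    ∃ P : Sylow p G, 
      Nat.card {x : G ⧸ Subgroup.center G | (H : Subgroup (G ⧸ Subgroup.center G)) ⊓
            Subgroup.map (MulAut.conj x⁻¹).toMonoidHom
              (H : Subgroup (G ⧸ Subgroup.center G)) ≠ ⊥} * Nat.card (Subgroup.center G) ≤
      Nat.card {y : G | ∃ b ∈ (P : Subgroup G), ∃ c ∈ (P : Subgroup G), b ∉ Subgroup.center G ∧ b * y = y * c} := by
  obtain ⟨P, hP⟩ := Sylow.mapSurjective_surjective
    (QuotientGroup.mk'_surjective (Subgroup.center G)) p H
  have hP' : (H : Subgroup (G ⧸ Subgroup.center G)) =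
      (P : Subgroup G).map (QuotientGroup.mk' (Subgroup.center G)) := by
    rw [← hP]; rfl
  refine ⟨P, ?_⟩
  have h1 := Nat.card_congr (QuotientGroup.preimageMkEquivSubgroupProdSet (Subgroup.center G)
    {x : G ⧸ Subgroup.center G | (H : Subgroup (G ⧸ Subgroup.center G)) ⊓
            Subgroup.map (MulAut.conj x⁻¹).toMonoidHom
              (H : Subgroup (G ⧸ Subgroup.center G)) ≠ ⊥})
  rw [Nat.card_prod, mul_comm] at h1
  rw [← h1]
  refine Nat.card_mono (Set.toFinite _) ?_
  intro y hy
  have hy' : (H : Subgroup (G ⧸ Subgroup.center G)) ⊓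
            Subgroup.map (MulAut.conj (QuotientGroup.mk' (Subgroup.center G) y)⁻¹).toMonoidHom
              (H : Subgroup (G ⧸ Subgroup.center G)) ≠ ⊥ := hy
  rw [Subgroup.ne_bot_iff_exists_ne_one] at hy'
  obtain ⟨⟨h, hh1, hh2⟩, hne⟩ := hy'
  obtain ⟨h', hh', hhe⟩ := hh2
  have hne' : h ≠ 1 := fun e => hne (Subtype.ext e)
  rw [hP'] at hh1 hh'
  obtain ⟨a, ha, rfl⟩ := hh1
  obtain ⟨b, hb, rfl⟩ := hh'
  have hhe' : QuotientGroup.mk' (Subgroup.center G) (y⁻¹ * b * y) =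
      QuotientGroup.mk' (Subgroup.center G) a := by
    rw [← hhe]
    simp
  have hz : a⁻¹ * (y⁻¹ * b * y) ∈ Subgroup.center G := by
    rw [← QuotientGroup.eq_one_iff]
    change QuotientGroup.mk' (Subgroup.center G) (a⁻¹ * (y⁻¹ * b * y)) = 1
    rw [map_mul, hhe', map_inv, inv_mul_cancel]
  set z := a⁻¹ * (y⁻¹ * b * y) with hzd
  have haz : y⁻¹ * b * y = z * a := by
    rw [← Subgroup.mem_center_iff.1 hz a, hzd]; group
  obtain ⟨k, hk⟩ := P.isPGroup' ⟨a, ha⟩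
  obtain ⟨l, hl⟩ := P.isPGroup' ⟨b, hb⟩
  have hk' : a ^ p ^ k = 1 := by simpa using congrArg Subtype.val hk
  have hl' : b ^ p ^ l = 1 := by simpa using congrArg Subtype.val hl
  have hk2 : a ^ p ^ (k + l) = 1 := by rw [pow_add, pow_mul, hk', one_pow]
  have hl2 : b ^ p ^ (k + l) = 1 := by rw [pow_add, mul_comm, pow_mul, hl', one_pow]
  have hz2 : z ^ p ^ (k + l) = 1 := by
    have h3 : (y⁻¹ * b * y) ^ p ^ (k + l) = 1 := by
      have := conj_pow (a := y⁻¹) (b := b) (i := p ^ (k + l))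
      rw [inv_inv] at this
      rw [this, hl2]; simp
    rw [haz, Commute.mul_pow (Subgroup.mem_center_iff.1 hz a).symm, hk2, mul_one] at h3
    exact h3
  have hzP : z ∈ (P : Subgroup G) := by
    have hn : (Subgroup.zpowers z).Normal := by
      constructor
      intro w hw g
      have hwc : w ∈ Subgroup.center G := (Subgroup.zpowers_le.2 hz) hw
      rw [Subgroup.mem_center_iff.1 hwc g, mul_inv_cancel_right]
      exact hw
    have hpz : IsPGroup p (Subgroup.zpowers z) := by
      rintro ⟨w, hw⟩
      refine ⟨k + l, ?_⟩
      apply Subtype.ext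
      obtain ⟨i, rfl⟩ := Subgroup.mem_zpowers_iff.1 hw
      change (z ^ i) ^ p ^ (k + l) = 1
      rw [← _root_.zpow_natCast, ← _root_.zpow_mul, mul_comm, _root_.zpow_mul, _root_.zpow_natCast, hz2, _root_.one_zpow]
    exact hpz.le_sylow_of_normal P (Subgroup.mem_zpowers z)
  refine ⟨b, hb, y⁻¹ * b * y, ?_, ?_, by group⟩
  · rw [haz]; exact mul_mem hzP ha
  · intro hbc
    apply hne'
    rw [← hhe]
    have : QuotientGroup.mk' (Subgroup.center G) b = 1 := (QuotientGroup.eq_one_iff b).2 hbc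
    rw [this]; simp

theorem bad_final {F : Type*} [Field F] [Fintype F] {n : ℕ} (hn : 2 ≤ n) {p : ℕ} [Fact p.Prime] (hp2 : p ≠ 2)
    (hpq : ¬ p ∣ Fintype.card F) (hpF : (p : F) ≠ 0)
    (P : Subgroup (SpecialLinearGroup (Fin n) F)) (hP : IsPGroup p P) :
    Nat.card {y : SpecialLinearGroup (Fin n) F | ∃ b ∈ P, ∃ c ∈ P,
      b ∉ Subgroup.center (SpecialLinearGroup (Fin n) F) ∧ b * y = y * c} * 8 ^ n * Fintype.card F ≤
    2048 * 7 ^ n * Nat.card (SpecialLinearGroup (Fin n) F) := by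
  have hpK : (p : AlgebraicClosure F) ≠ 0 := by
    have := (map_ne_zero (algebraMap F (AlgebraicClosure F))).2 hpF
    simpa using this
  obtain ⟨d, hd, hd2⟩ : ∃ d, (n * n ≤ d + 2 * n ∨ n * n + 8 ≤ d + 4 * n) ∧
      4 ^ n * Fintype.card F ^ (2 * n + d) ≤ 256 * Fintype.card F ^ (n * n) := by
    have hq : 2 ≤ Fintype.card F := Fintype.one_lt_card
    by_cases h4 : n < 4
    · refine ⟨n * n - 2 * n, Or.inl (by omega), ?_⟩
      have : 2 * n + (n * n - 2 * n) = n * n := by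
        have : 2 * n ≤ n * n := Nat.mul_le_mul_right n hn
        omega
      rw [this]
      apply Nat.mul_le_mul_right
      calc 4 ^ n ≤ 4 ^ 4 := Nat.pow_le_pow_right (by norm_num) (by omega)
        _ = 256 := by norm_num
    · obtain ⟨k, rfl⟩ := Nat.exists_eq_add_of_le (show 4 ≤ n by omega)
      refine ⟨(4 + k) * (4 + k) + 8 - 4 * (4 + k), Or.inr (by omega), ?_⟩
      have e1 : 2 * (4 + k) + ((4 + k) * (4 + k) + 8 - 4 * (4 + k)) = (4 + k) * (4 + k) - 2 * k := by
        have : 4 * (4 + k) ≤ (4 + k) * (4 + k) := Nat.mul_le_mul_right _ (by omega)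
        omega
      have e2 : (4 + k) * (4 + k) = ((4 + k) * (4 + k) - 2 * k) + 2 * k := by
        have : 4 * (4 + k) ≤ (4 + k) * (4 + k) := Nat.mul_le_mul_right _ (by omega)
        omega
      rw [e1]
      set t := (4 + k) * (4 + k) - 2 * k
      rw [e2, pow_add, pow_add, pow_mul _ 2 k]
      have : 4 ^ k ≤ (Fintype.card F ^ 2) ^ k := Nat.pow_le_pow_left (by nlinarith) _
      calc 4 ^ 4 * 4 ^ k * Fintype.card F ^ t ≤ 4 ^ 4 * (Fintype.card F ^ 2) ^ k * Fintype.card F ^ t := by gcongr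
        _ = _ := by ring
  have h1 := bad_count (K := AlgebraicClosure F) hp2 hpK P hP d hd
  have h2 := P_bound hn hp2 hpq P hP
  have h3 := card_SL_lower (F := F) (show 0 < n by omega)
  have hq : 2 ≤ Fintype.card F := Fintype.one_lt_card
  generalize Nat.card (SpecialLinearGroup (Fin n) F) = N at *
  generalize Nat.card P = M at *
  generalize Nat.card {y : SpecialLinearGroup (Fin n) F | ∃ b ∈ P, ∃ c ∈ P,
      b ∉ Subgroup.center (SpecialLinearGroup (Fin n) F) ∧ b * y = y * c} = B at *
  generalize Fintype.card F = q at *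
  have hn2 : n * n ≤ 2 * 2 ^ n := by
    have : ∀ k, (k + 3) * (k + 3) ≤ 2 * 2 ^ (k + 3) := by
      intro k
      induction k with
      | zero => norm_num
      | succ k ih => 
        rw [show k + 1 + 3 = (k + 3) + 1 by omega, pow_succ]
        nlinarith
    rcases Nat.lt_or_ge n 3 with h | h
    · have : n = 2 := by omega
      subst this; norm_num
    · obtain ⟨k, rfl⟩ := Nat.exists_eq_add_of_le' h
      exact this k
  have hI : n * n * q ^ ((n - 1) * (n - 1) + 1) * 8 ^ n * q ^ 2 ≤ 32 * 7 ^ n * q ^ (n * n) := by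
    obtain ⟨k, rfl⟩ := Nat.exists_eq_add_of_le' hn
    have e : (k + 2) * (k + 2) = ((k + 2 - 1) * (k + 2 - 1) + 1) + 2 + 2 * k := by
      rw [show k + 2 - 1 = k + 1 by omega]; ring
    have e3 : q ^ ((k + 2) * (k + 2)) = q ^ ((k + 2 - 1) * (k + 2 - 1) + 1) * q ^ 2 * (q ^ 2) ^ k := by
      rw [← pow_mul, ← pow_add, ← pow_add, ← e]
    rw [e3]
    have h4 : 4 ^ k ≤ (q ^ 2) ^ k := Nat.pow_le_pow_left (by nlinarith) _
    have h5 : (k + 2) * (k + 2) * 8 ^ (k + 2) ≤ 32 * 7 ^ (k + 2) * 4 ^ k := by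
      calc (k + 2) * (k + 2) * 8 ^ (k + 2) ≤ 2 * 2 ^ (k + 2) * 8 ^ (k + 2) := Nat.mul_le_mul_right _ hn2
        _ = 2 * 16 ^ 2 * 16 ^ k := by 
          rw [mul_assoc, ← mul_pow, mul_assoc, ← pow_add]; ring_nf
        _ ≤ 32 * 7 ^ 2 * 28 ^ k := by
          apply Nat.mul_le_mul (by norm_num) (Nat.pow_le_pow_left (by norm_num) _)
        _ = _ := by
          rw [show 28 = 7 * 4 by norm_num, mul_pow]; ring
    calc _ = ((k + 2) * (k + 2) * 8 ^ (k + 2)) * (q ^ ((k + 2 - 1) * (k + 2 - 1) + 1) * q ^ 2) := by ring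
      _ ≤ (32 * 7 ^ (k + 2) * (q ^ 2) ^ k) * (q ^ ((k + 2 - 1) * (k + 2 - 1) + 1) * q ^ 2) :=
        Nat.mul_le_mul_right _ (h5.trans (Nat.mul_le_mul_left _ h4))
      _ = _ := by ring
  have hII : M * M * q ^ d * 8 ^ n * q ^ 2 ≤ 256 * 7 ^ n * q ^ (n * n) := by
    calc M * M * q ^ d * 8 ^ n * q ^ 2 = (2 ^ n * M ^ 2) * 4 ^ n * q ^ (d + 2) := by
          rw [show 8 = 2 * 4 by norm_num, mul_pow]; ring
      _ ≤ (7 ^ n * q ^ (2 * n - 2)) * 4 ^ n * q ^ (d + 2) := by gcongr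
      _ = 7 ^ n * (4 ^ n * q ^ (2 * n + d)) := by
          rw [show 2 * n + d = (2 * n - 2) + (d + 2) by omega, pow_add q (2 * n - 2)]; ring
      _ ≤ 7 ^ n * (256 * q ^ (n * n)) := Nat.mul_le_mul_left _ hd2
      _ = _ := by ring
  have hfin : (B * 8 ^ n * q) * q ≤ (2048 * 7 ^ n * N) * q := by
    calc (B * 8 ^ n * q) * q = B * (8 ^ n * q ^ 2) := by ring
      _ ≤ (n * n * q ^ ((n - 1) * (n - 1) + 1) + M * M * q ^ d) * (8 ^ n * q ^ 2) := Nat.mul_le_mul_right _ h1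
      _ ≤ 512 * 7 ^ n * q ^ (n * n) := by nlinarith [Nat.zero_le (7 ^ n * q ^ (n * n))]
      _ ≤ 512 * 7 ^ n * (4 * q * N) := Nat.mul_le_mul_left _ h3
      _ = _ := by ring
  exact Nat.le_of_mul_le_mul_right hfin (by omega)


theorem Q_bound {F : Type} [Field F] [Fintype F] {n : ℕ} (hn : 2 ≤ n) {p : ℕ} (hp : p.Prime) (hp2 : p ≠ 2)
    (hpq : ¬ p ∣ Fintype.card F)
    (H : Sylow p (ProjectiveSpecialLinearGroup (Fin n) F)) :
    (Nat.card {x : ProjectiveSpecialLinearGroup (Fin n) F |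
          (H : Subgroup (ProjectiveSpecialLinearGroup (Fin n) F)) ⊓
            Subgroup.map (MulAut.conj x⁻¹).toMonoidHom
              (H : Subgroup (ProjectiveSpecialLinearGroup (Fin n) F)) ≠ ⊥} : ℝ)
        / (Nat.card (ProjectiveSpecialLinearGroup (Fin n) F) : ℝ) ≤
      2048 * (7 / 8) ^ n / (Fintype.card F : ℝ) := by
  haveI : Fact p.Prime := ⟨hp⟩
  have hq : 2 ≤ Fintype.card F := Fintype.one_lt_card
  have hpF : (p : F) ≠ 0 := by
    intro h0
    have h1 : IsCoprime (p : ℤ) (Fintype.card F : ℤ) :=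
      Nat.isCoprime_iff_coprime.2 ((hp.coprime_iff_not_dvd).2 hpq)
    have h2 := h1.map (Int.castRingHom F)
    simp [h0] at h2
  obtain ⟨P, hP⟩ := quot_red H
  have h1 := bad_final hn hp2 hpq hpF P.1 P.isPGroup'
  have h2 := Subgroup.card_eq_card_quotient_mul_card_subgroup
    (Subgroup.center (SpecialLinearGroup (Fin n) F))
  rw [h2] at h1
  have hZ : 0 < Nat.card (Subgroup.center (SpecialLinearGroup (Fin n) F)) := Nat.card_pos
  have hG : 0 < Nat.card (ProjectiveSpecialLinearGroup (Fin n) F) := Nat.card_pos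
  have h3 := (Nat.mul_le_mul_right (8 ^ n * Fintype.card F) hP).trans
    ((mul_assoc _ _ _).symm.le.trans h1)
  change _ ≤ 2048 * 7 ^ n * (Nat.card (ProjectiveSpecialLinearGroup (Fin n) F) * _) at h3
  generalize Nat.card (Subgroup.center (SpecialLinearGroup (Fin n) F)) = Z at *
  generalize Nat.card (ProjectiveSpecialLinearGroup (Fin n) F) = N at *
  generalize hB : Nat.card {x : ProjectiveSpecialLinearGroup (Fin n) F |
          (H : Subgroup (ProjectiveSpecialLinearGroup (Fin n) F)) ⊓
            Subgroup.map (MulAut.conj x⁻¹).toMonoidHom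
              (H : Subgroup (ProjectiveSpecialLinearGroup (Fin n) F)) ≠ ⊥} = B at *
  generalize Fintype.card F = q at *
  have h4 : B * 8 ^ n * q ≤ 2048 * 7 ^ n * N := by
    apply Nat.le_of_mul_le_mul_right (c := Z) _ hZ
    calc B * 8 ^ n * q * Z = B * Z * (8 ^ n * q) := by ring
      _ ≤ _ := h3
      _ = _ := by ring
  have h5 : (B : ℝ) * 8 ^ n * q ≤ 2048 * 7 ^ n * N := by exact_mod_cast h4
  have hq' : (0 : ℝ) < q := by exact_mod_cast (by omega : 0 < q)
  have hN' : (0 : ℝ) < N := by exact_mod_cast hG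
  rw [div_le_div_iff₀ hN' hq', div_pow, mul_div_assoc', div_mul_eq_mul_div, le_div_iff₀ (by positivity)]
  linarith

theorem omega_bound (N M : ℕ) (hN : N ≠ 0) (h : N ≤ M) (s : Finset ℕ) (hs : s ⊆ N.primeFactors) :
    (s.card : ℝ) ≤ Real.log M / Real.log 2 := by
  have h1 : 2 ^ s.card ≤ N := by
    calc 2 ^ s.card ≤ ∏ p ∈ s, p := by
          rw [← Finset.prod_const]
          exact Finset.prod_le_prod' fun p hp => (Nat.prime_of_mem_primeFactors (hs hp)).two_le
      _ ≤ ∏ p ∈ N.primeFactors, p := Finset.prod_le_prod_of_subset_of_one_le' hs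
          fun p hp _ => (Nat.prime_of_mem_primeFactors hp).one_le
      _ ≤ N := Nat.le_of_dvd (Nat.pos_of_ne_zero hN) (Nat.prod_primeFactors_dvd N)
  rw [le_div_iff₀ (Real.log_pos (by norm_num)), ← Real.log_pow]
  apply Real.log_le_log (by positivity)
  exact_mod_cast h1.trans h

theorem stmt18 : ∀ ε : ℝ, 0 < ε → ∃ N : ℕ,
    ∀ (r f n q : ℕ), r.Prime → 0 < f → q = r ^ f → 2 ≤ n →
    ∀ (F : Type) [Field F] [Fintype F], Fintype.card F = q →
    ∀ H : (p : ℕ) → Sylow p (ProjectiveSpecialLinearGroup (Fin n) F),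
    N ≤ Nat.card (ProjectiveSpecialLinearGroup (Fin n) F) →
    ∑ p ∈ (Nat.card (ProjectiveSpecialLinearGroup (Fin n) F)).primeFactors.filter
        (fun p => p ≠ 2 ∧ p ≠ r),
      (Nat.card {x : ProjectiveSpecialLinearGroup (Fin n) F |
          (H p : Subgroup (ProjectiveSpecialLinearGroup (Fin n) F)) ⊓
            Subgroup.map (MulAut.conj x⁻¹).toMonoidHom
              (H p : Subgroup (ProjectiveSpecialLinearGroup (Fin n) F)) ≠ ⊥} : ℝ)
        / (Nat.card (ProjectiveSpecialLinearGroup (Fin n) F) : ℝ)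
      < ε := by
  intro ε hε
  have ha : Filter.Tendsto (fun n : ℕ => (n : ℝ) ^ 2 * (7 / 8) ^ n) Filter.atTop (nhds 0) :=
    tendsto_pow_const_mul_const_pow_of_abs_lt_one 2 (by rw [abs_lt]; constructor <;> norm_num)
  have hb : Filter.Tendsto (fun q : ℕ => Real.log q / q) Filter.atTop (nhds 0) :=
    (Real.isLittleO_log_id_atTop.tendsto_div_nhds_zero).comp tendsto_natCast_atTop_atTop
  obtain ⟨A, hA⟩ := ha.bddAbove_range
  obtain ⟨B, hB⟩ := hb.bddAbove_range
  have hA' : ∀ n : ℕ, (n : ℝ) ^ 2 * (7 / 8) ^ n ≤ |A| + 1 := fun n => by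
    have := hA ⟨n, rfl⟩
    have h2 := le_abs_self A
    simp only at this
    linarith
  have hB' : ∀ q : ℕ, Real.log q / q ≤ |B| + 1 := fun n => by
    have := hB ⟨n, rfl⟩
    have h2 := le_abs_self B
    simp only at this
    linarith
  have hA0 : 0 < |A| + 1 := by positivity
  have hB0 : 0 < |B| + 1 := by positivity
  generalize |A| + 1 = A at *
  generalize |B| + 1 = B at *
  have hl2 : 0 < Real.log 2 := Real.log_pos (by norm_num)
  set c : ℝ := 2048 / Real.log 2 with hc
  have hc0 : 0 < c := by positivity
  obtain ⟨n0, hn0⟩ := Filter.eventually_atTop.1 (ha.eventually_lt_const (show 0 < ε / (c * B) by positivity))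
  obtain ⟨q0, hq0⟩ := Filter.eventually_atTop.1 (hb.eventually_lt_const (show 0 < ε / (c * A) by positivity))
  refine ⟨(q0 + 1) ^ (n0 * n0) + 1, ?_⟩
  intro r f n q hr hf hqr hn F _ _ hFq H hN
  have hq2 : 2 ≤ q := hFq ▸ Fintype.one_lt_card
  have hup : Nat.card (ProjectiveSpecialLinearGroup (Fin n) F) ≤ q ^ (n * n) := by
    rw [← hFq]
    refine le_trans ?_ (card_SL_upper (F := F) (n := n))
    exact Nat.card_le_card_of_surjective _ (QuotientGroup.mk'_surjective _)
  have hGpos : Nat.card (ProjectiveSpecialLinearGroup (Fin n) F) ≠ 0 := Nat.card_pos.ne'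
  set s := (Nat.card (ProjectiveSpecialLinearGroup (Fin n) F)).primeFactors.filter
        (fun p => p ≠ 2 ∧ p ≠ r) with hs
  have hcard := omega_bound _ _ hGpos hup s (Finset.filter_subset _ _)
  have hsum := Finset.sum_le_card_nsmul s (fun p => (Nat.card {x : ProjectiveSpecialLinearGroup (Fin n) F |
          (H p : Subgroup (ProjectiveSpecialLinearGroup (Fin n) F)) ⊓
            Subgroup.map (MulAut.conj x⁻¹).toMonoidHom
              (H p : Subgroup (ProjectiveSpecialLinearGroup (Fin n) F)) ≠ ⊥} : ℝ)
        / (Nat.card (ProjectiveSpecialLinearGroup (Fin n) F) : ℝ)) (2048 * (7 / 8) ^ n / (q : ℝ)) (by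
      intro p hp
      rw [hs, Finset.mem_filter] at hp
      have hpp := Nat.prime_of_mem_primeFactors hp.1
      have := Q_bound hn hpp hp.2.1 (by
        rw [hFq, hqr]
        intro hd
        exact hp.2.2 ((Nat.prime_dvd_prime_iff_eq hpp hr).1 (hpp.dvd_of_dvd_pow hd))) (H p)
      rw [hFq] at this
      exact this)
  refine lt_of_le_of_lt hsum ?_
  rw [nsmul_eq_mul]
  have hq' : (0 : ℝ) < q := by exact_mod_cast (by omega : 0 < q)
  have hmain : (s.card : ℝ) * (2048 * (7 / 8) ^ n / (q : ℝ)) ≤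
      c * ((n : ℝ) ^ 2 * (7 / 8) ^ n) * (Real.log q / q) := by
    calc (s.card : ℝ) * (2048 * (7 / 8) ^ n / (q : ℝ)) ≤ 
        (Real.log ((q ^ (n * n) : ℕ) : ℝ) / Real.log 2) * (2048 * (7 / 8) ^ n / (q : ℝ)) :=
          mul_le_mul_of_nonneg_right hcard (by positivity)
      _ = _ := by
        push_cast
        rw [Real.log_pow, hc]
        push_cast
        field_simp
  refine lt_of_le_of_lt hmain ?_
  have hlq : 0 < Real.log q / q := div_pos (Real.log_pos (by exact_mod_cast (by omega : 1 < q))) hq'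
  have hnn : 0 < (n : ℝ) ^ 2 * (7 / 8) ^ n := by
    have : (0 : ℝ) < n := by exact_mod_cast (by omega : 0 < n)
    positivity
  by_cases h : n0 ≤ n
  · have h1 := hn0 n h
    rw [lt_div_iff₀ (by positivity)] at h1
    calc c * ((n : ℝ) ^ 2 * (7 / 8) ^ n) * (Real.log q / q) ≤ c * ((n : ℝ) ^ 2 * (7 / 8) ^ n) * B :=
          mul_le_mul_of_nonneg_left (hB' q) (by positivity)
      _ = ((n : ℝ) ^ 2 * (7 / 8) ^ n) * (c * B) := by ring
      _ < ε := h1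
  · have hqq : q0 ≤ q := by
      by_contra hlt
      have : q ^ (n * n) ≤ (q0 + 1) ^ (n0 * n0) :=
        (Nat.pow_le_pow_left (by omega) _).trans (Nat.pow_le_pow_right (by omega)
          (Nat.mul_le_mul (by omega) (by omega)))
      omega
    have h1 := hq0 q hqq
    rw [lt_div_iff₀ (by positivity)] at h1
    calc c * ((n : ℝ) ^ 2 * (7 / 8) ^ n) * (Real.log q / q) ≤ c * A * (Real.log q / q) :=
          mul_le_mul_of_nonneg_right (mul_le_mul_of_nonneg_left (hA' n) hc0.le) hlq.le
      _ = (Real.log q / q) * (c * A) := by ring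
      _ < ε := h1
end

section
/- Let n be an integer with 5 ≤ n ≤ 500 and let G be the alternating group A_n. Then for every family (H_p)_{p ∈ π(G)} consisting of one Sylow p-subgroup H_p of G for each prime divisor p of |G|, there exists an element x ∈ G such that H_p ∩ H_p^x = 1 for every p ∈ π(G). -/
namespace Aux19

section

open Equiv Equiv.Perm

/-- A permutation group of degree `n` and order `c`, together with an upper bound `F` for the
generating function of its elements of order dividing `p`. -/
def PGood (p n c : ℕ) (F : ℕ → ℕ) : Prop :=
  ∃ (α W I : Type) (_ : Fintype α) (_ : DecidableEq α) (_ : Group W) (_ : Finite W)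
    (_ : Fintype I) (ρ : W →* Perm α) (s : I → ℕ) (φ : W → I),
    Function.Injective ρ ∧ Fintype.card α = n ∧ Nat.card W = c ∧
    (∀ w w' : W, w ^ p = 1 → w' ^ p = 1 → φ w = φ w' → w = w') ∧
    (∀ w : W, w ^ p = 1 → (ρ w).support.card = p * s (φ w)) ∧
    ∀ X : ℕ, ∑ i, X ^ (s i) = F X

theorem pgood_unit (p : ℕ) : PGood p 1 1 (fun _ => 1) := by
  refine ⟨Unit, Unit, Unit, inferInstance, inferInstance, inferInstance, inferInstance,
    inferInstance, 1, fun _ => 0, id, ?_, ?_, ?_, ?_, ?_, ?_⟩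
  · exact Function.injective_of_subsingleton _
  · simp
  · simp
  · intros; subsingleton
  · intros; simp
  · simp

theorem pgood_zero (p : ℕ) : PGood p 0 1 (fun _ => 1) := by
  refine ⟨Empty, Unit, Unit, inferInstance, inferInstance, inferInstance, inferInstance,
    inferInstance, 1, fun _ => 0, id, ?_, ?_, ?_, ?_, ?_, ?_⟩
  · exact Function.injective_of_subsingleton _
  · simp
  · simp
  · intros; subsingleton
  · intros; simp
  · simp

theorem pgood_add {p a b c d : ℕ} {F G : ℕ → ℕ} (h1 : PGood p a c F) (h2 : PGood p b d G) :
    PGood p (a + b) (c * d) (fun X => F X * G X) := by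
  obtain ⟨α, W, I, _, _, _, _, _, ρ, s, φ, hi, ha, hc, hφ, hs, hF⟩ := h1
  obtain ⟨β, V, J, _, _, _, _, _, τ, t, ψ, hj, hb, hd, hψ, ht, hG⟩ := h2
  refine ⟨α ⊕ β, W × V, I × J, inferInstance, inferInstance, inferInstance, inferInstance,
    inferInstance, (Perm.sumCongrHom α β).comp (ρ.prodMap τ), fun i => s i.1 + t i.2,
    fun w => (φ w.1, ψ w.2), ?_, ?_, ?_, ?_, ?_, ?_⟩
  · rw [MonoidHom.coe_comp]
    refine Perm.sumCongrHom_injective.comp ?_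
    exact Function.Injective.prodMap hi hj
  · simp [ha, hb]
  · simp [hc, hd]
  · rintro ⟨w, v⟩ ⟨w', v'⟩ h h' e
    simp only [Prod.pow_mk, Prod.mk_eq_one, Prod.mk.injEq] at h h' e ⊢
    exact ⟨hφ _ _ h.1 h'.1 e.1, hψ _ _ h.2 h'.2 e.2⟩
  · rintro ⟨w, v⟩ h
    simp only [Prod.pow_mk, Prod.mk_eq_one] at h
    rw [mul_add, ← hs _ h.1, ← ht _ h.2, ← Finset.card_disjSum]
    congr 1
    ext x
    cases x <;> simp
  · intro X
    simp only []
    rw [← hF, ← hG, Fintype.sum_mul_sum, Fintype.sum_prod_type]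
    simp [pow_add]

theorem wreath_pow_left {D Q : Type} [Group D] [Group Q] (w w' : D ≀ᵣ Q)
    (hr : w.right = w'.right) (k : ℕ)
    (hk : ∀ i < k, w.right ^ i ≠ 1 → w.left ((w.right ^ i)⁻¹) = w'.left ((w.right ^ i)⁻¹))
    (hk1 : ∀ i < k, 0 < i → w.right ^ i ≠ 1) :
    ∀ j ≤ k, 0 < j → (w.left 1)⁻¹ * (w ^ j).left 1 = (w'.left 1)⁻¹ * (w' ^ j).left 1 := by
  have hright : ∀ (v : D ≀ᵣ Q) (j : ℕ), (v ^ j).right = v.right ^ j := by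
    intro v j
    exact map_pow RegularWreathProduct.rightHom v j
  intro j
  induction j with
  | zero => intro _ h; omega
  | succ j ih =>
    intro hj _
    rcases Nat.eq_zero_or_pos j with h0 | h0
    · subst h0; simp
    · have e := ih (by omega) h0
      rw [pow_succ, pow_succ]
      simp only [RegularWreathProduct.mul_left, Pi.mul_apply, mul_one]
      rw [← mul_assoc, ← mul_assoc, e, hright, hright, ← hr,
        hk j (by omega) (hk1 j (by omega) h0)]

theorem pgood_wreath {p n c : ℕ} {F : ℕ → ℕ} (hp : p.Prime) (h1 : PGood p n c F) (hn : 0 < n) :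
    PGood p (p * n) (p * c ^ p)
      (fun X => F X ^ p + (p - 1) * c ^ (p - 1) * X ^ n) := by
  classical
  obtain ⟨α, W, I, _, _, _, _, _, ρ, s, φ, hi, ha, hc, hφ, hs, hF⟩ := h1
  have : Fact p.Prime := ⟨hp⟩
  have : Fintype W := Fintype.ofFinite W
  obtain ⟨Q, _, _, hQ⟩ : ∃ (Q : Type) (_ : Group Q) (_ : Fintype Q), Fintype.card Q = p :=
    ⟨Multiplicative (ZMod p), inferInstance, inferInstance, by simp⟩
  let : MulAction W α := MulAction.compHom α ρ
  have hsm : ∀ (w : W) (a : α), w • a = ρ w a := fun w a => rfl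
  have : FaithfulSMul W α := ⟨fun h => hi (Equiv.ext h)⟩
  have : Nonempty α := Fintype.card_pos_iff.mp (by omega)
  have hright : ∀ (v : W ≀ᵣ Q) (j : ℕ), (v ^ j).right = v.right ^ j := by
    intro v j
    exact map_pow RegularWreathProduct.rightHom v j
  have hleft : ∀ (v : W ≀ᵣ Q) (j : ℕ), v.right = 1 → (v ^ j).left = v.left ^ j := by
    intro v j hv
    induction j with
    | zero => simp
    | succ j ih =>
      rw [pow_succ, pow_succ, RegularWreathProduct.mul_left, ih, hright, hv]
      simp
  have hleft1 : ∀ (v : W ≀ᵣ Q), v ^ p = 1 → v.right = 1 → ∀ q, v.left q ^ p = 1 := by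
    intro v hv hr q
    have := hleft v p hr
    rw [hv] at this
    have := congrFun this q
    simpa using this.symm
  refine ⟨α × Q, W ≀ᵣ Q, (Q → I) ⊕ ({q : Q // q ≠ 1} × ({x : Q // x ≠ 1} → W)),
    inferInstance, inferInstance, inferInstance, inferInstance, inferInstance,
    RegularWreathProduct.toPerm W Q α, Sum.elim (fun f => ∑ q, s (f q)) (fun _ => n),
    fun w => if h : w.right = 1 then Sum.inl (fun q => φ (w.left q)) else
      Sum.inr (⟨w.right, h⟩, fun x => w.left x.1), ?_, ?_, ?_, ?_, ?_, ?_⟩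
  · exact RegularWreathProduct.toPermInj W Q α
  · rw [Fintype.card_prod, ha, hQ, mul_comm]
  · rw [RegularWreathProduct.card, Nat.card_eq_fintype_card (α := Q), hQ, hc, mul_comm]
  · intro w w' hw hw' e
    by_cases h : w.right = 1 <;> by_cases h' : w'.right = 1
    · simp only [h, h', dite_true] at e
      have e := Sum.inl_injective e
      ext q
      · exact hφ _ _ (hleft1 w hw h q) (hleft1 w' hw' h' q) (congrFun e q)
      · rw [h, h']
    · simp [h, h'] at e
    · simp [h, h'] at e
    · simp only [h, h', dite_false] at e
      have e := Sum.inr_injective e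
      simp only [Prod.mk.injEq, Subtype.mk.injEq] at e
      obtain ⟨e1, e2⟩ := e
      have e3 : ∀ x, x ≠ 1 → w.left x = w'.left x := fun x hx => congrFun e2 ⟨x, hx⟩
      have ho : orderOf w.right = p := by
        refine orderOf_eq_prime ?_ h
        rw [← hright, hw]; rfl
      have key := wreath_pow_left w w' e1 p
        (fun i _ hne => e3 _ (by simpa using hne))
        (fun i hi h0 => pow_ne_one_of_lt_orderOf (by omega) (by omega)) p le_rfl hp.pos
      rw [hw, hw'] at key
      simp only [RegularWreathProduct.one_left, Pi.one_apply, mul_one, inv_inj] at key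
      ext x
      · by_cases hx : x = 1
        · rw [hx, key]
        · exact e3 x hx
      · exact e1
  · intro w hw
    by_cases h : w.right = 1
    · simp only [h, dite_true, Sum.elim_inl]
      rw [Finset.mul_sum]
      have : (RegularWreathProduct.toPerm W Q α w).support =
          Finset.univ.filter (fun x : α × Q => x.1 ∈ (ρ (w.left x.2)).support) := by
        ext ⟨a, q⟩
        have : RegularWreathProduct.toPerm W Q α w (a, q) = w • (a, q) := rfl
        simp [this, h, hsm]
      rw [this, Finset.card_filter, Fintype.sum_prod_type_right]
      refine Finset.sum_congr rfl fun q _ => ?_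
      rw [← hs _ (hleft1 w hw h q), Finset.sum_boole]
      simp only [Nat.cast_id]
      congr 1
      ext x
      simp
    · simp only [h, dite_false, Sum.elim_inr]
      have : (RegularWreathProduct.toPerm W Q α w).support = Finset.univ := by
        ext ⟨a, q⟩
        have : RegularWreathProduct.toPerm W Q α w (a, q) = w • (a, q) := rfl
        simp [this, h]
      rw [this, Finset.card_univ, Fintype.card_prod, ha, hQ, mul_comm]
  · intro X
    rw [Fintype.sum_sum_type]
    congr 1
    · simp only [Sum.elim_inl]
      rw [← hF, ← hQ, ← Finset.card_univ, ← Finset.prod_const, Finset.prod_univ_sum]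
      simp [Finset.prod_pow_eq_pow_sum]
    · simp only [Sum.elim_inr, Finset.sum_const, smul_eq_mul, Finset.card_univ]
      have h1 : Fintype.card {q : Q // q ≠ 1} = p - 1 := by
        rw [Fintype.card_subtype_compl, Fintype.card_subtype_eq, hQ]
      rw [Fintype.card_prod, Fintype.card_fun, h1, ← Nat.card_eq_fintype_card (α := W), hc]

def cc (p : ℕ) : ℕ → ℕ
  | 0 => 1
  | m + 1 => p * cc p m ^ p

def ff (p X : ℕ) : ℕ → ℕ
  | 0 => 1
  | m + 1 => ff p X m ^ p + (p - 1) * cc p m ^ (p - 1) * X ^ (p ^ m)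

theorem pgood_ff {p : ℕ} (hp : p.Prime) (m : ℕ) :
    PGood p (p ^ m) (cc p m) (fun X => ff p X m) := by
  induction m with
  | zero => exact pgood_unit p
  | succ m ih =>
    rw [pow_succ, mul_comm]
    exact pgood_wreath hp ih (pow_pos hp.pos m)

theorem pgood_pow {p a c : ℕ} {F : ℕ → ℕ} (h1 : PGood p a c F) (d : ℕ) :
    PGood p (d * a) (c ^ d) (fun X => F X ^ d) := by
  induction d with
  | zero => simpa using pgood_zero p
  | succ d ih =>
    have := pgood_add ih h1
    simpa only [pow_succ, Nat.succ_mul] using this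

/-- generating function / order over the base `p` digits -/
def FF (p X : ℕ) : ℕ → List ℕ → ℕ
  | _, [] => 1
  | m, d :: L => ff p X m ^ d * FF p X (m + 1) L

def CC (p : ℕ) : ℕ → List ℕ → ℕ
  | _, [] => 1
  | m, d :: L => cc p m ^ d * CC p (m + 1) L

theorem pgood_FF {p : ℕ} (hp : p.Prime) (L : List ℕ) : ∀ m,
    PGood p (p ^ m * Nat.ofDigits p L) (CC p m L) (fun X => FF p X m L) := by
  induction L with
  | nil => intro m; simpa [Nat.ofDigits, FF, CC] using pgood_zero p
  | cons d L ih =>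
    intro m
    have := pgood_add (pgood_pow (pgood_ff hp m) d) (ih (m + 1))
    simp only [FF, CC, Nat.ofDigits_cons]
    convert this using 1
    ring

theorem cc_eq {p : ℕ} (m : ℕ) : ∃ e, cc p m = p ^ e ∧ (p - 1) * e + 1 = (p - 1 + 1) ^ m := by
  induction m with
  | zero => exact ⟨0, by simp [cc], by simp⟩
  | succ m ih =>
    obtain ⟨e, h1, h2⟩ := ih
    by_cases hp : p = 0
    · subst hp
      refine ⟨1, by simp [cc], by simp⟩
    refine ⟨1 + e * p, ?_, ?_⟩
    · rw [cc, h1, pow_add, pow_mul, pow_one]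
    · rw [pow_succ, ← h2]
      obtain ⟨q, rfl⟩ : ∃ q, p = q + 1 := ⟨p - 1, by omega⟩
      simp only [Nat.add_sub_cancel]
      ring

theorem CC_eq {p : ℕ} (hp : p.Prime) (L : List ℕ) : ∀ m, ∃ e, CC p m L = p ^ e ∧
    (p - 1) * e + L.sum = p ^ m * Nat.ofDigits p L := by
  have hp1 : p - 1 + 1 = p := Nat.sub_add_cancel hp.one_le
  induction L with
  | nil => intro m; exact ⟨0, by simp [CC], by simp [Nat.ofDigits]⟩
  | cons d L ih =>
    intro m
    obtain ⟨e, h1, h2⟩ := ih (m + 1)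
    obtain ⟨e', h3, h4⟩ := cc_eq (p := p) m
    rw [hp1] at h4
    refine ⟨e' * d + e, ?_, ?_⟩
    · rw [CC, h1, h3, pow_add, pow_mul]
    · rw [Nat.ofDigits_cons, List.sum_cons, mul_add ((p:ℕ) ^ m)]
      have : p ^ m * (p * Nat.ofDigits p L) = p ^ (m + 1) * Nat.ofDigits p L := by ring
      rw [this, ← h2, ← h4]
      ring

theorem pgood_main {p : ℕ} (hp : p.Prime) (n : ℕ) :
    PGood p n (p ^ (n.factorial.factorization p)) (fun X => FF p X 0 (p.digits n)) := by
  have : Fact p.Prime := ⟨hp⟩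
  have := pgood_FF hp (p.digits n) 0
  obtain ⟨e, h1, h2⟩ := CC_eq hp (p.digits n) 0
  rw [pow_zero, one_mul, Nat.ofDigits_digits] at this h2
  have h3 := sub_one_mul_padicValNat_factorial (p := p) n
  have h4 := Nat.digit_sum_le p n
  have h5 : e = n.factorial.factorization p := by
    rw [Nat.factorization_def _ hp]
    have h6 : (p - 1) * e = (p - 1) * padicValNat p n.factorial := by omega
    exact Nat.eq_of_mul_eq_mul_left (by have := hp.two_le; omega) h6
  rw [← h5, ← h1]
  exact this

theorem digit_extract {I : Type} [Fintype I] (s : I → ℕ) (Y k : ℕ) (hY : Fintype.card I < Y) :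
    (∑ i, Y ^ s i) / Y ^ k % Y = (Finset.univ.filter (fun i => s i = k)).card := by
  classical
  have hY0 : 0 < Y := by omega
  set M := (Finset.univ.filter (fun i => s i = k)).card
  have hM : M < Y := lt_of_le_of_lt (Finset.card_le_univ _) hY
  have h1 : ∑ i, Y ^ s i = ∑ i with s i < k, Y ^ s i + ∑ i with ¬ s i < k, Y ^ s i :=
    (Finset.sum_filter_add_sum_filter_not _ _ _).symm
  have h2 : ∑ i with ¬ s i < k, Y ^ s i = Y ^ k * ∑ i with ¬ s i < k, Y ^ (s i - k) := by
    rw [Finset.mul_sum]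
    refine Finset.sum_congr rfl fun i hi => ?_
    simp only [Finset.mem_filter, Finset.mem_univ, true_and] at hi
    rw [← pow_add]; congr 1; omega
  have h3 : ∑ i with s i < k, Y ^ s i < Y ^ k := by
    rcases Nat.eq_zero_or_pos k with h | h
    · subst h; simp
    · calc _ ≤ ∑ i with s i < k, Y ^ (k - 1) := by
            refine Finset.sum_le_sum fun i hi => ?_
            simp only [Finset.mem_filter, Finset.mem_univ, true_and] at hi
            exact Nat.pow_le_pow_right hY0 (by omega)
        _ = (Finset.univ.filter (fun i => s i < k)).card * Y ^ (k - 1) := by simp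
        _ < Y * Y ^ (k - 1) := by
            refine Nat.mul_lt_mul_of_pos_right ?_ (pow_pos hY0 _)
            exact lt_of_le_of_lt (Finset.card_le_univ _) hY
        _ = Y ^ k := by rw [← pow_succ']; congr 1; omega
  have h4 : ∑ i with ¬ s i < k, Y ^ (s i - k) =
      M + Y * ∑ i with k < s i, Y ^ (s i - k - 1) := by
    rw [← Finset.sum_filter_add_sum_filter_not (Finset.univ.filter (fun i => ¬ s i < k))
      (fun i => s i = k), Finset.filter_filter, Finset.filter_filter]
    congr 1
    · have : (Finset.univ.filter (fun i => ¬ s i < k ∧ s i = k)) =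
          Finset.univ.filter (fun i => s i = k) := by
        ext i; simp; omega
      rw [this]
      simp only [M, Finset.card_eq_sum_ones]
      refine Finset.sum_congr rfl fun i hi => ?_
      simp only [Finset.mem_filter, Finset.mem_univ, true_and] at hi
      simp [hi]
    · rw [Finset.mul_sum]
      refine Finset.sum_congr ?_ fun i hi => ?_
      · ext i; simp; omega
      · simp only [Finset.mem_filter, Finset.mem_univ, true_and] at hi
        rw [← pow_succ']; congr 1; omega
  rw [h1, h2, Nat.add_mul_div_left _ _ (pow_pos hY0 k), Nat.div_eq_of_lt h3, zero_add, h4,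
    Nat.add_mul_mod_self_left, Nat.mod_eq_of_lt hM]

/-- number of elements of order dividing `p` in `H` with `k` cycles of length `p` -/
noncomputable def cnt {n : ℕ} (p : ℕ) (H : Subgroup (Perm (Fin n))) (k : ℕ) : ℕ :=
  Nat.card {g : Perm (Fin n) // g ∈ H ∧ g ^ p = 1 ∧ g.support.card = p * k}

def coef (p n Y k : ℕ) : ℕ := FF p Y 0 (p.digits n) / Y ^ k % Y

theorem support_permCongr {α β : Type} [Fintype α] [Fintype β] [DecidableEq α] [DecidableEq β]
    (e : α ≃ β) (σ : Perm α) : (e.permCongr σ).support.card = σ.support.card := by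
  have : (e.permCongr σ).support = σ.support.map e.toEmbedding := by
    ext x
    simp only [mem_support, Equiv.permCongr_apply, Finset.mem_map_equiv]
    rw [not_iff_not, ← Equiv.eq_symm_apply]
  rw [this, Finset.card_map]

theorem cnt_le {p n : ℕ} (hp : p.Prime) (H : Subgroup (Perm (Fin n))) (hH : IsPGroup p H)
    (Y k : ℕ) (hY : FF p 1 0 (p.digits n) < Y) : cnt p H k ≤ coef p n Y k := by
  classical
  have : Fact p.Prime := ⟨hp⟩
  obtain ⟨α, W, I, _, _, _, _, _, ρ, s, φ, hi, ha, hc, hφ, hs, hF⟩ := pgood_main hp n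
  let e : α ≃ Fin n := Fintype.equivFinOfCardEq ha
  let τ : W →* Perm (Fin n) := e.permCongrHom.toMonoidHom.comp ρ
  have hτ : ∀ w, τ w = e.permCongr (ρ w) := fun w => rfl
  have hτi : Function.Injective τ := e.permCongrHom.injective.comp hi
  have hcard : Nat.card τ.range = p ^ (Nat.card (Perm (Fin n))).factorization p := by
    rw [← Nat.card_congr (MonoidHom.ofInjective hτi).toEquiv, hc, Nat.card_perm, Nat.card_fin]
  let Q : Sylow p (Perm (Fin n)) := Sylow.ofCard τ.range hcard
  obtain ⟨P, hP⟩ := hH.exists_le_sylow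
  obtain ⟨x, hx⟩ := MulAction.exists_smul_eq (Perm (Fin n)) P Q
  have key : ∀ g ∈ H, ∃ w, τ w = x * g * x⁻¹ := by
    intro g hg
    have : x * g * x⁻¹ ∈ ((x • P : Sylow p (Perm (Fin n))) : Subgroup (Perm (Fin n))) := by
      rw [Sylow.coe_subgroup_smul]
      exact ⟨g, hP hg, rfl⟩
    rw [hx] at this
    exact this
  choose! f hf using key
  have hp' : ∀ g ∈ H, g ^ p = 1 → f g ^ p = 1 := by
    intro g hg h1
    apply hτi
    rw [map_pow, hf g hg, conj_pow, h1]
    simp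
  have hsupp : ∀ g ∈ H, (ρ (f g)).support.card = g.support.card := by
    intro g hg
    rw [← support_permCongr e, ← hτ, hf g hg, Equiv.Perm.card_support_conj]
  have hFY := hF Y
  simp only [] at hFY
  rw [coef, ← hFY, digit_extract]
  · rw [cnt, ← Fintype.card_subtype, ← Nat.card_eq_fintype_card]
    refine Nat.card_le_card_of_injective
      (fun g => ⟨φ (f g.1), ?_⟩) ?_
    · have h1 := hs (f g.1) (hp' _ g.2.1 g.2.2.1)
      rw [hsupp _ g.2.1, g.2.2.2] at h1
      exact (Nat.eq_of_mul_eq_mul_left hp.pos h1).symm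
    · rintro ⟨g, hg, hg1, hg2⟩ ⟨g', hg', hg1', hg2'⟩ h
      simp only [Subtype.mk.injEq] at h ⊢
      have h1 := hφ _ _ (hp' g hg hg1) (hp' g' hg' hg1') h
      have h2 := hf g hg
      rw [h1, hf g' hg'] at h2
      simpa using h2.symm
  · have := hF 1
    simp only [one_pow, Finset.sum_const, Finset.card_univ, smul_eq_mul, mul_one] at this
    rwa [this]

theorem zmod_mul_perm {p : ℕ} (hp : p.Prime) (h2 : p ≠ 2) :
    ∃ (m : Perm (ZMod p)) (_ : Fintype (ZMod p)) (_ : DecidableEq (ZMod p)) (j : ℕ),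
      sign m = -1 ∧ m * Equiv.addRight (1 : ZMod p) * m⁻¹ = Equiv.addRight (1 : ZMod p) ^ j := by
  classical
  have : Fact p.Prime := ⟨hp⟩
  obtain ⟨a, ha⟩ := IsCyclic.exists_generator (α := (ZMod p)ˣ)
  have hp3 : 2 < p := lt_of_le_of_ne hp.two_le (Ne.symm h2)
  have ha1 : a ≠ 1 := by
    rintro rfl
    have h1 : Fintype.card (ZMod p)ˣ = 1 := by
      rw [Fintype.card_eq_one_iff]
      refine ⟨1, fun y => ?_⟩
      have := ha y
      simpa using this
    rw [ZMod.card_units] at h1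
    omega
  have hpow : ∀ i : ℤ, ∀ x : ZMod p, ((Units.mulLeft a : Perm (ZMod p)) ^ i) x = (a ^ i : (ZMod p)ˣ) * x := by
    intro i x
    have : ∀ k : ℕ, ∀ x : ZMod p, ((Units.mulLeft a : Perm (ZMod p)) ^ k) x = (a ^ k : (ZMod p)ˣ) * x := by
      intro k
      induction k with
      | zero => simp
      | succ k ih =>
        intro x
        rw [pow_succ, Perm.mul_apply, ih, pow_succ]
        simp [mul_assoc]
    cases i with
    | ofNat k => simpa using this k x
    | negSucc k =>
      rw [zpow_negSucc, Perm.inv_eq_iff_eq, this, zpow_negSucc]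
      simp
  have hc : (Units.mulLeft a : Perm (ZMod p)).IsCycle := by
    refine ⟨1, ?_, ?_⟩
    · simpa using ha1
    · intro y hy
      have hy0 : y ≠ 0 := by
        rintro rfl
        simp at hy
      obtain ⟨i, hi⟩ := ha (Units.mk0 y hy0)
      refine ⟨i, ?_⟩
      rw [hpow]
      simp only at hi
      rw [hi]
      simp
  have hs : (Units.mulLeft a : Perm (ZMod p)).support = Finset.univ.erase 0 := by
    ext y
    simp only [mem_support, Units.mulLeft_apply, Finset.mem_erase, Finset.mem_univ, and_true]
    rw [not_iff_not]
    constructor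
    · intro h
      by_contra hy
      apply ha1
      ext
      exact mul_right_cancel₀ hy (by simpa using h)
    · rintro rfl; simp
  refine ⟨Units.mulLeft a, inferInstance, inferInstance, (a : ZMod p).val, ?_, ?_⟩
  · rw [hc.sign, hs, Finset.card_erase_of_mem (Finset.mem_univ _), Finset.card_univ, ZMod.card]
    have : Even (p - 1) := hp.even_sub_one h2
    rw [this.neg_one_pow]
  · have hadd : ∀ (k : ℕ) (x : ZMod p), ((Equiv.addRight (1 : ZMod p)) ^ k) x = x + k := by
      intro k
      induction k with
      | zero => simp
      | succ k ih => intro x; rw [pow_succ, Perm.mul_apply, ih]; simp; ring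
    ext x
    rw [hadd, Perm.mul_apply, Perm.mul_apply, ← zpow_neg_one, hpow]
    rw [zpow_neg_one]
    change (a : ZMod p) * (((a⁻¹ : (ZMod p)ˣ) : ZMod p) * x + 1) = _
    rw [mul_add, ← mul_assoc, Units.mul_inv, ZMod.natCast_zmod_val]
    ring

theorem exists_odd_normalizer {p n : ℕ} (hp : p.Prime) (g : Perm (Fin n)) (hg : g ^ p = 1)
    (hg1 : g ≠ 1) : ∃ u : Perm (Fin n), sign u = -1 ∧ ∃ a : ℕ, u * g * u⁻¹ = g ^ a := by
  have : Fact p.Prime := ⟨hp⟩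
  by_cases h : Subgroup.centralizer {g} ≤ alternatingGroup (Fin n)
  · have hct := cycleType_of_pow_prime_eq_one hg
    have hk : g.cycleType.card ≠ 0 := by simpa using hg1
    have hmem : p ∈ g.cycleType := by
      rw [hct, Multiset.mem_replicate]; exact ⟨hk, rfl⟩
    have h2 : p ≠ 2 := by
      rintro rfl
      have := Equiv.Perm.OnCycleFactors.odd_of_centralizer_le_alternatingGroup h 2 hmem
      revert this; decide
    have hk1 := Equiv.Perm.count_le_one_of_centralizer_le_alternating h p
    rw [hct, Multiset.count_replicate_self] at hk1
    have hk1 : g.cycleType.card = 1 := by omega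
    rw [hk1, Multiset.replicate_one] at hct
    have hpn : p ≤ n := by
      have h1 := g.sum_cycleType
      rw [hct, Multiset.sum_singleton] at h1
      rw [h1]
      simpa using Finset.card_le_univ g.support
    obtain ⟨m, fi, di, j, hm, hmj⟩ := zmod_mul_perm hp h2
    have hfc : Fintype.card (ZMod p) = p := ZMod.card p
    obtain ⟨f⟩ : Nonempty (ZMod p ↪ Fin n) := by
      apply Function.Embedding.nonempty_of_card_le
      rw [hfc]; simpa using hpn
    let e : ZMod p ≃ {x // x ∈ Set.range f} := Equiv.ofInjective f f.injective
    classical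
    let τ : Perm (ZMod p) := Equiv.addRight 1
    have hadd : ∀ (k : ℕ) (x : ZMod p), (τ ^ k) x = x + k := by
      intro k
      induction k with
      | zero => simp
      | succ k ih => intro x; rw [pow_succ, Perm.mul_apply, ih]; simp [τ]; ring
    have hτ1 : τ ≠ 1 := by
      intro h
      have := congrArg (fun s => s 0) h
      simp [τ] at this
    have hτc : τ.IsCycle := by
      refine isCycle_of_prime_order' (?_ : (orderOf τ).Prime) ?_
      · rw [orderOf_eq_prime (p := p) _ hτ1]
        · exact hp
        · ext x; rw [hadd]; simp
      · rw [orderOf_eq_prime (p := p) _ hτ1, hfc]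
        · have := hp.two_le; omega
        · ext x; rw [hadd]; simp
    have hτt : τ.cycleType = {p} := by
      rw [hτc.cycleType]
      congr 1
      have : τ.support = Finset.univ := by
        ext x; simp [τ]
      rw [this, Finset.card_univ, hfc]
    have hext : (τ.extendDomain e).cycleType = {p} := by
      rw [cycleType_extendDomain, hτt]
    obtain ⟨c, hc⟩ := isConj_iff.mp (isConj_iff_cycleType_eq.mpr (hext.trans hct.symm))
    refine ⟨c * m.extendDomain e * c⁻¹, ?_, j, ?_⟩
    · rw [map_mul, map_mul, sign_extendDomain, map_inv]
      rw [mul_right_comm, mul_inv_cancel, one_mul]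
      convert hm
    · rw [← hc, conj_pow, ← extendDomain_pow]
      have h1 : m.extendDomain e * τ.extendDomain e * (m.extendDomain e)⁻¹
          = (τ ^ j).extendDomain e := by
        rw [extendDomain_inv, extendDomain_mul, extendDomain_mul, hmj]
      rw [← h1]
      group
  · rw [SetLike.not_le_iff_exists] at h
    obtain ⟨u, hu, hu'⟩ := h
    refine ⟨u, ?_, 1, ?_⟩
    · rw [mem_alternatingGroup] at hu'
      exact (Int.units_eq_one_or _).resolve_left hu'
    · rw [Subgroup.mem_centralizer_singleton_iff] at hu
      rw [pow_one]
      first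
        | rw [hu]; simp
        | rw [← hu]; simp

theorem card_centralizer_pk {p n k : ℕ} (hp : p.Prime) (hk : 0 < k) (g : Perm (Fin n))
    (hg : g ^ p = 1) (hs : g.support.card = p * k) :
    Nat.card (Subgroup.centralizer {g}) = p ^ k * k.factorial * (n - p * k).factorial ∧
      p * k ≤ n ∧ (p = 2 → sign g = 1 → k % 2 = 0) := by
  have : Fact p.Prime := ⟨hp⟩
  have hct := cycleType_of_pow_prime_eq_one hg
  have h1 := g.sum_cycleType
  have h2 : g.cycleType.card = k := by
    rw [hct, Multiset.sum_replicate, hs, smul_eq_mul, mul_comm] at h1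
    exact Nat.eq_of_mul_eq_mul_left hp.pos h1
  rw [h2] at hct
  refine ⟨?_, ?_, ?_⟩
  · rw [nat_card_centralizer, h1, hs, hct, Multiset.prod_replicate, Multiset.toFinset_replicate,
      if_neg (by omega), Finset.prod_singleton, Multiset.count_replicate_self, Fintype.card_fin]
    ring
  · rw [← hs]
    simpa using Finset.card_le_univ g.support
  · rintro rfl hsg
    rw [sign_of_cycleType, hct, Multiset.sum_replicate, Multiset.card_replicate] at hsg
    by_contra hodd
    have : Odd (k • 2 + k) := by
      rw [smul_eq_mul, Nat.odd_iff]; omega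
    rw [this.neg_one_pow] at hsg
    exact absurd hsg (by decide)

open Classical in
noncomputable def badSet {n : ℕ} (H : Subgroup (Perm (Fin n))) : Finset (Perm (Fin n)) :=
  Finset.univ.filter (fun x => sign x = 1 ∧ ∃ g ∈ H, g ≠ 1 ∧ x * g * x⁻¹ ∈ H)

theorem two_mul_even {n p : ℕ} (hp : p.Prime) (H : Subgroup (Perm (Fin n))) (g : Perm (Fin n))
    (hg : g ^ p = 1) (hg1 : g ≠ 1) [DecidablePred (· ∈ H)] :
    2 * (Finset.univ.filter (fun x : Perm (Fin n) => sign x = 1 ∧ x * g * x⁻¹ ∈ H)).card ≤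
      (Finset.univ.filter (fun x : Perm (Fin n) => x * g * x⁻¹ ∈ H)).card := by
  obtain ⟨u, hu, a, ha⟩ := exists_odd_normalizer hp g hg hg1
  have h1 : (Finset.univ.filter (fun x : Perm (Fin n) => sign x = 1 ∧ x * g * x⁻¹ ∈ H)).card ≤
      (Finset.univ.filter (fun x : Perm (Fin n) => ¬ sign x = 1 ∧ x * g * x⁻¹ ∈ H)).card := by
    refine Finset.card_le_card_of_injOn (fun x => x * u) ?_ ?_
    · intro x hx
      simp only [Finset.coe_filter, Finset.mem_univ, true_and, Set.mem_ofPred_eq] at hx ⊢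
      refine ⟨?_, ?_⟩
      · rw [map_mul, hx.1, hu]; decide
      · have : x * u * g * (x * u)⁻¹ = (x * g * x⁻¹) ^ a := by
          rw [conj_pow, ← ha]; group
        rw [this]
        exact H.pow_mem hx.2 a
    · intro x _ y _ h
      exact mul_right_cancel h
  have h2 := Finset.card_filter_add_card_filter_not
    (s := Finset.univ.filter (fun x : Perm (Fin n) => x * g * x⁻¹ ∈ H)) (fun x => sign x = 1)
  rw [Finset.filter_filter, Finset.filter_filter] at h2
  simp only [and_comm] at h1 h2 ⊢
  omega

theorem card_conj_mem_le {n p k : ℕ} (hp : p.Prime) (hk : 0 < k) (H : Subgroup (Perm (Fin n)))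
    (g : Perm (Fin n)) (hg : g ^ p = 1) (hs : g.support.card = p * k) [DecidablePred (· ∈ H)] :
    (Finset.univ.filter (fun x : Perm (Fin n) => x * g * x⁻¹ ∈ H)).card ≤
      cnt p H k * (p ^ k * k.factorial * (n - p * k).factorial) := by
  classical
  let S := Finset.univ.filter (fun h : Perm (Fin n) => h ∈ H ∧ h ^ p = 1 ∧ h.support.card = p * k)
  have hS : S.card = cnt p H k := by
    rw [cnt, Nat.card_eq_fintype_card, Fintype.card_subtype]
  rw [← hS, mul_comm, ← (card_centralizer_pk hp hk g hg hs).1]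
  refine Finset.card_le_mul_card_image_of_maps_to (f := fun x => x * g * x⁻¹) ?_ _ ?_
  · intro x hx
    simp only [Finset.mem_filter, Finset.mem_univ, true_and, S] at hx ⊢
    refine ⟨hx, ?_, ?_⟩
    · rw [conj_pow, hg]; simp
    · rw [card_support_conj, hs]
  · intro h hh
    rcases Finset.eq_empty_or_nonempty
      ((Finset.univ.filter (fun x : Perm (Fin n) => x * g * x⁻¹ ∈ H)).filter
        (fun x => x * g * x⁻¹ = h)) with he | ⟨y, hy⟩
    · rw [he]; simp
    · simp only [Finset.mem_filter, Finset.mem_univ, true_and] at hy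
      have : Nat.card (Subgroup.centralizer {g}) =
          (Finset.univ.filter (fun z => z ∈ Subgroup.centralizer {g})).card := by
        rw [← Fintype.card_subtype, Nat.card_eq_fintype_card]
      rw [this]
      refine Finset.card_le_card_of_injOn (fun x => y⁻¹ * x) ?_ ?_
      · intro x hx
        simp only [Finset.coe_filter, Finset.mem_filter, Finset.mem_univ, true_and,
          Set.mem_ofPred_eq] at hx ⊢
        rw [Subgroup.mem_centralizer_singleton_iff]
        have h3 : x * g * x⁻¹ = y * g * y⁻¹ := hx.2.trans hy.2.symm
        have h4 : x * g = y * g * y⁻¹ * x := by rw [← h3]; group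
        have h5 : y⁻¹ * x * g = g * (y⁻¹ * x) := by
          rw [mul_assoc, h4]; group
        first | exact h5 | exact h5.symm
      · intro x _ y _ h
        exact mul_left_cancel h

theorem bad_step1 {n p : ℕ} (hp : p.Prime) (H : Subgroup (Perm (Fin n))) (hH : IsPGroup p H)
    [DecidablePred (· ∈ H)] :
    (p - 1) * (badSet H).card ≤
      ∑ g ∈ Finset.univ.filter (fun g : Perm (Fin n) => g ∈ H ∧ g ^ p = 1 ∧ g ≠ 1),
        (Finset.univ.filter (fun x : Perm (Fin n) => sign x = 1 ∧ x * g * x⁻¹ ∈ H)).card := by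
  classical
  set S := Finset.univ.filter (fun g : Perm (Fin n) => g ∈ H ∧ g ^ p = 1 ∧ g ≠ 1) with hSdef
  have h1 : ∑ g ∈ S,
      (Finset.univ.filter (fun x : Perm (Fin n) => sign x = 1 ∧ x * g * x⁻¹ ∈ H)).card =
      ∑ x : Perm (Fin n), (S.filter (fun g => sign x = 1 ∧ x * g * x⁻¹ ∈ H)).card := by
    simp_rw [Finset.card_filter]
    rw [Finset.sum_comm]
  rw [h1]
  calc (p - 1) * (badSet H).card = ∑ x ∈ badSet H, (p - 1) := by simp [mul_comm]
    _ ≤ ∑ x ∈ badSet H, (S.filter (fun g => sign x = 1 ∧ x * g * x⁻¹ ∈ H)).card := by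
        refine Finset.sum_le_sum fun x hx => ?_
        simp only [badSet, Finset.mem_filter, Finset.mem_univ, true_and] at hx
        obtain ⟨hx1, g, hg, hg1, hgx⟩ := hx
        obtain ⟨b, hb⟩ : ∃ b : ℕ, orderOf (g ^ b) = p := by
          obtain ⟨m, hm⟩ := hH ⟨g, hg⟩
          have hm' : g ^ p ^ m = 1 := by simpa using congrArg Subtype.val hm
          obtain ⟨r, hr, hr2⟩ := (Nat.dvd_prime_pow hp).mp (orderOf_dvd_of_pow_eq_one hm')
          have hr0 : r ≠ 0 := by
            rintro rfl
            rw [pow_zero, orderOf_eq_one_iff] at hr2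
            exact hg1 hr2
          refine ⟨p ^ (r - 1), ?_⟩
          rw [orderOf_pow' _ (pow_pos hp.pos _).ne', hr2,
            Nat.gcd_eq_right (pow_dvd_pow p (by omega)), Nat.pow_div (by omega) hp.pos]
          have : r - (r - 1) = 1 := by omega
          rw [this, pow_one]
        set c := g ^ b with hc
        have hcH : c ∈ H := H.pow_mem hg b
        have hcx : x * c * x⁻¹ ∈ H := by rw [hc, ← conj_pow]; exact H.pow_mem hgx b
        have : p - 1 = (Finset.Ico 1 p).card := by simp
        rw [this]
        refine Finset.card_le_card_of_injOn (fun i => c ^ i) ?_ ?_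
        · intro i hi
          simp only [Finset.coe_Ico, Set.mem_Ico] at hi
          simp only [S, Finset.coe_filter, Finset.mem_filter, Finset.mem_univ, true_and,
            Set.mem_ofPred_eq]
          refine ⟨⟨H.pow_mem hcH i, ?_, ?_⟩, hx1, ?_⟩
          · rw [← pow_mul, mul_comm, pow_mul, ← hb, pow_orderOf_eq_one, one_pow]
          · exact pow_ne_one_of_lt_orderOf (by omega) (by omega)
          · rw [← conj_pow]; exact H.pow_mem hcx i
        · intro i hi j hj hij
          simp only [Finset.coe_Ico, Set.mem_Ico] at hi hj
          exact pow_injOn_Iio_orderOf (by simpa [hb] using hi.2) (by simpa [hb] using hj.2) hij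
    _ ≤ _ := Finset.sum_le_sum_of_subset (Finset.subset_univ _)

theorem bad_le {n p : ℕ} (hp : p.Prime) (H : Subgroup (Perm (Fin n))) (hH : IsPGroup p H)
    (hA : H ≤ alternatingGroup (Fin n)) :
    2 * ((p - 1) * (badSet H).card) ≤ ∑ k ∈ Finset.Icc 1 (n / p),
      if p = 2 ∧ k % 2 = 1 then 0 else
        cnt p H k ^ 2 * (p ^ k * k.factorial * (n - p * k).factorial) := by
  classical
  have : Fact p.Prime := ⟨hp⟩
  refine (Nat.mul_le_mul_left 2 (bad_step1 hp H hH)).trans ?_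
  rw [Finset.mul_sum]
  set S := Finset.univ.filter (fun g : Perm (Fin n) => g ∈ H ∧ g ^ p = 1 ∧ g ≠ 1) with hSdef
  have hdv : ∀ g ∈ S, ∃ k ∈ Finset.Icc 1 (n / p), g.support.card = p * k := by
    intro g hg
    simp only [S, Finset.mem_filter, Finset.mem_univ, true_and] at hg
    have hct := cycleType_of_pow_prime_eq_one hg.2.1
    have h1 := g.sum_cycleType
    rw [hct, Multiset.sum_replicate, smul_eq_mul, mul_comm] at h1
    refine ⟨g.cycleType.card, ?_, h1.symm⟩
    have h0 : g.cycleType.card ≠ 0 := by simpa using hg.2.2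
    rw [Finset.mem_Icc, Nat.le_div_iff_mul_le hp.pos, mul_comm, h1]
    exact ⟨by omega, by simpa using Finset.card_le_univ g.support⟩
  choose! κ hκ hκ2 using hdv
  rw [← Finset.sum_fiberwise_of_maps_to hκ]
  refine Finset.sum_le_sum fun k hk => ?_
  have hk0 : 0 < k := (Finset.mem_Icc.mp hk).1
  have hmem : ∀ g ∈ S.filter (fun g => κ g = k),
      g ∈ H ∧ g ^ p = 1 ∧ g ≠ 1 ∧ g.support.card = p * k := by
    intro g hg
    rw [Finset.mem_filter] at hg
    have h1 := hκ2 g hg.1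
    rw [hg.2] at h1
    have h2 := hg.1
    simp only [S, Finset.mem_filter, Finset.mem_univ, true_and] at h2
    exact ⟨h2.1, h2.2.1, h2.2.2, h1⟩
  split_ifs with hc
  · rw [Nat.le_zero]
    apply Finset.sum_eq_zero
    intro g hg
    obtain ⟨h1, h2, h3, h4⟩ := hmem g hg
    have := (card_centralizer_pk hp hk0 g h2 h4).2.2 hc.1 (mem_alternatingGroup.mp (hA h1))
    omega
  · calc _ ≤ ∑ g ∈ S.filter (fun g => κ g = k),
          cnt p H k * (p ^ k * k.factorial * (n - p * k).factorial) := by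
          refine Finset.sum_le_sum fun g hg => ?_
          obtain ⟨h1, h2, h3, h4⟩ := hmem g hg
          exact (two_mul_even hp H g h2 h3).trans (card_conj_mem_le hp hk0 H g h2 h4)
      _ = (S.filter (fun g => κ g = k)).card *
          (cnt p H k * (p ^ k * k.factorial * (n - p * k).factorial)) := by simp
      _ ≤ cnt p H k * (cnt p H k * (p ^ k * k.factorial * (n - p * k).factorial)) := by
          refine Nat.mul_le_mul_right _ ?_
          rw [cnt, Nat.card_eq_fintype_card, Fintype.card_subtype]
          refine Finset.card_le_card fun g hg => ?_
          obtain ⟨h1, h2, h3, h4⟩ := hmem g hg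
          simp [h1, h2, h4]
      _ = _ := by ring

/-- the numerical bound -/
def TT (p n Y : ℕ) : ℕ := ∑ k ∈ Finset.Icc 1 (n / p),
      if p = 2 ∧ k % 2 = 1 then 0 else
        coef p n Y k ^ 2 * (p ^ k * k.factorial * (n - p * k).factorial)

theorem bad_le_TT {n p Y : ℕ} (hp : p.Prime) (H : Subgroup (Perm (Fin n))) (hH : IsPGroup p H)
    (hA : H ≤ alternatingGroup (Fin n)) (hY : FF p 1 0 (p.digits n) < Y) :
    2 * ((p - 1) * (badSet H).card) ≤ TT p n Y := by
  refine (bad_le hp H hH hA).trans (Finset.sum_le_sum fun k _ => ?_)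
  split_ifs
  · exact le_rfl
  · exact Nat.mul_le_mul_right _ (Nat.pow_le_pow_left (cnt_le hp H hH Y k hY) 2)

/-! numerics -/

def forceN {α : Type} (n : ℕ) (k : ℕ → α) : α := Nat.rec (motive := fun _ => α) (k 0) (fun m _ => k (m + 1)) n

theorem forceN_eq {α : Type} (n : ℕ) (k : ℕ → α) : forceN n k = k n := by
  cases n <;> rfl

def GG (p : ℕ) : ℕ → ℕ → ℕ → ℕ → ℕ → ℕ
  | 0, _, _, _, _ => 1
  | t + 1, f, c, e, n =>
    bif Nat.ble p n then
      forceN (f ^ p + (p - 1) * c ^ (p - 1) * e) fun f1 =>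
      forceN (p * c ^ p) fun c1 => forceN (e ^ p) fun e1 => forceN (n / p) fun n1 =>
      f ^ (n % p) * GG p t f1 c1 e1 n1
    else f ^ n

theorem GG_eq {p : ℕ} (hp : 2 ≤ p) (X : ℕ) : ∀ t n m, n < 2 ^ t →
    GG p t (ff p X m) (cc p m) (X ^ (p ^ m)) n = FF p X m (p.digits n) := by
  intro t
  induction t with
  | zero =>
    intro n m h
    have : n = 0 := by simpa using h
    subst this
    simp [GG, FF]
  | succ t ih =>
    intro n m h
    rcases Nat.eq_zero_or_pos n with rfl | hn
    · have h0 : Nat.ble p 0 = false := by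
        rw [← Bool.not_eq_true, Nat.ble_eq]; omega
      simp [GG, FF, h0]
    · rw [GG]
      rw [Nat.digits_def' (by omega) hn, FF]
      rcases Nat.lt_or_ge n p with hnp | hnp
      · have h0 : Nat.ble p n = false := by
          rw [← Bool.not_eq_true, Nat.ble_eq]; omega
        simp only [h0, cond_false]
        rw [Nat.mod_eq_of_lt hnp, Nat.div_eq_of_lt hnp]
        simp [FF]
      · have h0 : Nat.ble p n = true := by rw [Nat.ble_eq]; omega
        simp only [h0, cond_true, forceN_eq]
        have h1 : n / p < 2 ^ t := by
          rw [Nat.div_lt_iff_lt_mul (by omega)]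
          calc n < 2 ^ t * 2 := by rw [← pow_succ]; exact h
            _ ≤ 2 ^ t * p := Nat.mul_le_mul_left _ hp
        rw [← ih (n / p) (m + 1) h1]
        simp only [ff, cc, pow_succ, pow_mul]

def FK (p X n : ℕ) : ℕ := GG p 9 1 1 X n

theorem FK_eq {p : ℕ} (hp : 2 ≤ p) (X n : ℕ) (hn : n < 512) : FK p X n = FF p X 0 (p.digits n) := by
  have := GG_eq hp X 9 n 0 (by norm_num; exact hn)
  simpa [FK, ff, cc] using this

theorem FF_digits_div {p : ℕ} (hp : 2 ≤ p) (X n : ℕ) :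
    FF p X 0 (p.digits n) = FF p X 1 (p.digits (n / p)) := by
  rcases Nat.eq_zero_or_pos n with rfl | hn
  · simp [FF]
  · rw [Nat.digits_def' (by omega) hn, FF]
    simp [ff]

theorem FF_digits_red {p : ℕ} (hp : 2 ≤ p) (X n : ℕ) :
    FF p X 0 (p.digits n) = FF p X 0 (p.digits (p * (n / p))) := by
  rw [FF_digits_div hp, FF_digits_div hp X (p * (n / p)), Nat.mul_div_cancel_left _ (by omega)]

theorem coef_red {p : ℕ} (hp : 2 ≤ p) (n Y k : ℕ) : coef p n Y k = coef p (p * (n / p)) Y k := by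
  unfold coef
  rw [FF_digits_red hp]

theorem fact_mono (r : ℕ) {a b : ℕ} (h : a ≤ b) :
    (a + r).factorial * b.factorial ≤ a.factorial * (b + r).factorial := by
  induction r with
  | zero => simp
  | succ r ih =>
    rw [← add_assoc, ← add_assoc, Nat.factorial_succ, Nat.factorial_succ]
    calc (a + r + 1) * (a + r).factorial * b.factorial
        = (a + r + 1) * ((a + r).factorial * b.factorial) := by ring
      _ ≤ (b + r + 1) * (a.factorial * (b + r).factorial) := Nat.mul_le_mul (by omega) ih
      _ = _ := by ring

theorem TT_mono {p : ℕ} (hp : 2 ≤ p) (n Y : ℕ) :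
    TT p n Y * (p * (n / p)).factorial ≤ TT p (p * (n / p)) Y * n.factorial := by
  unfold TT
  rw [Nat.mul_div_cancel_left _ (by omega), Finset.sum_mul, Finset.sum_mul]
  refine Finset.sum_le_sum fun k hk => ?_
  split_ifs
  · simp
  · rw [coef_red hp n Y k]
    have hk' := (Finset.mem_Icc.mp hk).2
    have h1 : p * k ≤ p * (n / p) := Nat.mul_le_mul_left _ hk'
    have h2 := Nat.div_add_mod n p
    have h3 := fact_mono (n % p) (a := p * (n / p) - p * k) (b := p * (n / p)) (by omega)
    have h4 : p * (n / p) - p * k + n % p = n - p * k := by omega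
    rw [h4, h2] at h3
    calc _ = coef p (p * (n / p)) Y k ^ 2 * (p ^ k * k.factorial) *
          ((n - p * k).factorial * (p * (n / p)).factorial) := by ring
      _ ≤ coef p (p * (n / p)) Y k ^ 2 * (p ^ k * k.factorial) *
          ((p * (n / p) - p * k).factorial * n.factorial) := Nat.mul_le_mul_left _ h3
      _ = _ := by ring

def lpK (p Y : ℕ) : ℕ → ℕ → ℕ → ℕ → ℕ → ℕ
  | 0, _, _, _, h => h
  | t + 1, k, S, R, h =>
    forceN (k + 1) fun k1 => forceN (S / Y) fun S1 =>
    forceN (R * (p * k1) / Nat.descFactorial (p * (t + 1)) p + 1) fun R1 =>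
    forceN ((bif Nat.beq p 2 && Nat.beq (k1 % 2) 1 then 0 else (S1 % Y) ^ 2 * R1) + h) fun h1 =>
    lpK p Y t k1 S1 R1 h1

def aT (p n Y k : ℕ) : ℕ :=
  if p = 2 ∧ k % 2 = 1 then 0 else coef p n Y k ^ 2 * (p ^ k * k.factorial)

theorem lpK_le (p n Y B N : ℕ) (hp : 0 < p) : ∀ t k R h,
    B * (p ^ k * k.factorial) * (p * t).factorial ≤ R * N →
    h * N + B * ∑ i ∈ Finset.range t, aT p n Y (k + i + 1) * (p * (t - 1 - i)).factorial ≤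
    lpK p Y t k (FF p Y 0 (p.digits n) / Y ^ k) R h * N := by
  intro t
  induction t with
  | zero => intro k R h _; simp [lpK]
  | succ t ih =>
    intro k R h hR
    rw [lpK]
    simp only [forceN_eq]
    have e1 : FF p Y 0 (p.digits n) / Y ^ k / Y = FF p Y 0 (p.digits n) / Y ^ (k + 1) := by
      rw [Nat.div_div_eq_div_mul, pow_succ]
    have e4 : (p * (t + 1)).factorial = Nat.descFactorial (p * (t + 1)) p * (p * t).factorial := by
      have := Nat.factorial_mul_descFactorial (n := p * (t + 1)) (k := p) (by nlinarith)
      rw [← this, mul_comm]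
      congr 2
      rw [mul_add, mul_one]; omega
    have hd : 0 < Nat.descFactorial (p * (t + 1)) p :=
      Nat.descFactorial_pos.mpr (by nlinarith)
    rw [e4] at hR
    rw [e1]
    generalize Nat.descFactorial (p * (t + 1)) p = d at *
    have hR1 : R * (p * (k + 1)) ≤ (R * (p * (k + 1)) / d + 1) * d := by
      have := Nat.lt_div_mul_add (a := R * (p * (k + 1))) hd
      rw [add_mul, one_mul]
      exact this.le
    generalize R * (p * (k + 1)) / d + 1 = R1 at *
    have hR2 : B * (p ^ (k + 1) * (k + 1).factorial) * (p * t).factorial ≤ R1 * N := by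
      refine Nat.le_of_mul_le_mul_left (c := d) ?_ hd
      calc d * (B * (p ^ (k + 1) * (k + 1).factorial) * (p * t).factorial)
          = B * (p ^ k * k.factorial) * (d * (p * t).factorial) * (p * (k + 1)) := by
            rw [Nat.factorial_succ]; ring
        _ ≤ R * N * (p * (k + 1)) := Nat.mul_le_mul_right _ hR
        _ = R * (p * (k + 1)) * N := by ring
        _ ≤ R1 * d * N := Nat.mul_le_mul_right _ hR1
        _ = _ := by ring
    refine le_trans ?_ (ih (k + 1) R1 _ hR2)
    rw [Finset.sum_range_succ', add_mul, mul_add]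
    have e5 : ∀ i, aT p n Y (k + 1 + i + 1) * (p * (t - 1 - i)).factorial =
        aT p n Y (k + (i + 1) + 1) * (p * (t + 1 - 1 - (i + 1))).factorial := by
      intro i
      rw [show k + 1 + i + 1 = k + (i + 1) + 1 by omega, show t - 1 - i = t + 1 - 1 - (i + 1) by omega]
    rw [Finset.sum_congr rfl fun i _ => e5 i]
    simp only [add_zero, Nat.add_sub_cancel, Nat.sub_zero]
    have e6 : B * (aT p n Y (k + 1) * (p * t).factorial) ≤
        (bif Nat.beq p 2 && Nat.beq ((k + 1) % 2) 1 then 0 else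
        (FF p Y 0 (p.digits n) / Y ^ (k + 1) % Y) ^ 2 * R1) * N := by
      unfold aT coef
      simp only [Bool.cond_eq_ite, Bool.and_eq_true, Nat.beq_eq]
      split_ifs
      · simp
      · calc _ = (FF p Y 0 (p.digits n) / Y ^ (k + 1) % Y) ^ 2 *
              (B * (p ^ (k + 1) * (k + 1).factorial) * (p * t).factorial) := by ring
          _ ≤ (FF p Y 0 (p.digits n) / Y ^ (k + 1) % Y) ^ 2 * (R1 * N) := Nat.mul_le_mul_left _ hR2
          _ = _ := by ring
    omega

theorem lpK_TT {p : ℕ} (hp : 2 ≤ p) (j Y B : ℕ) :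
    B * TT p (p * j) Y ≤ lpK p Y j 0 (FF p Y 0 (p.digits (p * j))) B 0 * (p * j).factorial := by
  have := lpK_le p (p * j) Y B (p * j).factorial (by omega) j 0 B 0 (by simp)
  simp only [pow_zero, Nat.div_one, zero_mul, zero_add] at this
  refine le_trans (Nat.mul_le_mul_left _ (le_of_eq ?_)) this
  rw [TT, Nat.mul_div_cancel_left _ (by omega)]
  have h : Finset.Icc 1 j = (Finset.range j).image (· + 1) := by
    ext x
    simp only [Finset.mem_Icc, Finset.mem_image, Finset.mem_range]
    constructor
    · rintro ⟨h1, h2⟩; exact ⟨x - 1, by omega, by omega⟩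
    · rintro ⟨y, h1, rfl⟩; omega
  rw [h, Finset.sum_image (by intro a _ b _ hab; simpa using hab)]
  refine Finset.sum_congr rfl fun i hi => ?_
  unfold aT
  have : p * j - p * (i + 1) = p * (j - 1 - i) := by
    rw [← Nat.mul_sub]; congr 1; omega
  rw [this]
  split_ifs
  · simp
  · ring

def chk (p w j : ℕ) : Bool :=
  forceN (p * j) fun n => forceN (2 ^ n + 2 * n + 1) fun Y => forceN (2 ^ 1100) fun B =>
  Nat.ble (FK p 1 n + 1) Y &&
  (forceN (FK p Y n) fun S =>
   Nat.ble (lpK p Y j 0 S B 0 * 10000) (w * ((p - 1) * B)))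

def chkA (p w lo : ℕ) : ℕ → Bool
  | 0 => true
  | t + 1 => forceN (lo + t) fun j => chk p w j && chkA p w lo t

theorem chkA_spec {p w lo : ℕ} : ∀ {t}, chkA p w lo t = true → ∀ j, lo ≤ j → j < lo + t → chk p w j = true := by
  intro t
  induction t with
  | zero => intro _ j h1 h2; omega
  | succ t ih =>
    intro h j h1 h2
    rw [chkA, forceN_eq, Bool.and_eq_true] at h
    rcases Nat.lt_or_ge j (lo + t) with h3 | h3
    · exact ih h.2 j h1 h3
    · rw [show j = lo + t by omega]; exact h.1

theorem bad_of_chk {n p w : ℕ} (hp : p.Prime) (hn : n ≤ 500) (h : chk p w (n / p) = true)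
    (H : Subgroup (Perm (Fin n))) (hH : IsPGroup p H)
    (hA : H ≤ alternatingGroup (Fin n)) : 20000 * (badSet H).card ≤ w * n.factorial := by
  have h2 := hp.two_le
  have hle : p * (n / p) ≤ n := Nat.mul_div_le n p
  unfold chk at h
  simp only [forceN_eq, Bool.and_eq_true, Nat.ble_eq] at h
  rw [FK_eq h2 _ _ (by omega), FK_eq h2 _ _ (by omega)] at h
  obtain ⟨ha, hb⟩ := h
  rw [← FF_digits_red h2] at ha
  have hB : 0 < 2 ^ 1100 := by positivity
  generalize 2 ^ (p * (n / p)) + 2 * (p * (n / p)) + 1 = Y at *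
  generalize 2 ^ 1100 = B at *
  have h3 := bad_le_TT hp H hH hA (Y := Y) ha
  have h4 := TT_mono h2 n Y
  have h5 := lpK_TT h2 (n / p) Y B
  have hpos : 0 < (p * (n / p)).factorial := Nat.factorial_pos _
  have hp1 : 0 < p - 1 := by omega
  generalize lpK p Y (n / p) 0 _ B 0 = r at *
  refine Nat.le_of_mul_le_mul_left (c := B * (p - 1) * (p * (n / p)).factorial) ?_ (by positivity)
  calc B * (p - 1) * (p * (n / p)).factorial * (20000 * (badSet H).card)
      = 2 * ((p - 1) * (badSet H).card) * (p * (n / p)).factorial * 10000 * B := by ring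
    _ ≤ TT p n Y * (p * (n / p)).factorial * 10000 * B := by gcongr
    _ ≤ TT p (p * (n / p)) Y * n.factorial * 10000 * B := by gcongr
    _ = B * TT p (p * (n / p)) Y * 10000 * n.factorial := by ring
    _ ≤ r * (p * (n / p)).factorial * 10000 * n.factorial := by gcongr
    _ = r * 10000 * (p * (n / p)).factorial * n.factorial := by ring
    _ ≤ w * ((p - 1) * B) * (p * (n / p)).factorial * n.factorial := by gcongr
    _ = _ := by ring

set_option maxRecDepth 100000
theorem chk2 : chkA 2 6500 5 246 = true := by decide +kernel
theorem chk3 : chkA 3 2800 3 164 = true := by decide +kernel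
theorem chk5 : chkA 5 40 2 99 = true := by decide +kernel
theorem chk7 : chkA 7 90 1 71 = true := by decide +kernel

def sv (p : ℕ) : Bool := [2,3,5,7,11,13,17,19].all fun d => !Nat.beq (p % d) 0 || Nat.beq p d

def chkB : ℕ → Bool
  | 0 => true
  | t + 1 => forceN (11 + t) fun p => ((!sv p) || chkA p 1 1 (500 / p)) && chkB t

theorem chkR : chkB 490 = true := by decide +kernel

def TK (p n Y : ℕ) : ℕ := ∑ k ∈ Finset.Icc 1 (n / p),
      if p = 2 ∧ k % 2 = 1 then 0 else
        (FK p Y n / Y ^ k % Y) ^ 2 * (p ^ k * k.factorial * (n - p * k).factorial)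

def bB (p n : ℕ) : ℕ := TK p n 1000 / (2 * (p - 1))

theorem bad_small {n p : ℕ} (hp : p.Prime) (hn : n < 512) (H : Subgroup (Perm (Fin n)))
    (hH : IsPGroup p H) (hA : H ≤ alternatingGroup (Fin n)) (hY : FK p 1 n < 1000) :
    (badSet H).card ≤ bB p n := by
  have h2 := hp.two_le
  have hY' := hY
  rw [FK_eq h2 _ _ hn] at hY'
  have h := bad_le_TT hp H hH hA hY'
  have e : TT p n 1000 = TK p n 1000 := by
    unfold TT TK coef
    rw [FK_eq h2 _ _ hn]
  rw [e, ← mul_assoc] at h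
  unfold bB
  rw [Nat.le_div_iff_mul_le (by omega), mul_comm]
  exact h

theorem small_num : ∀ n ∈ [5,6,7,9], (∀ p ∈ [2,3,5,7], FK p 1 n < 1000) ∧
    2 * ∑ p ∈ ({2,3,5,7} : Finset ℕ) with p ≤ n, bB p n < n.factorial := by decide +kernel

theorem eight_num : (∀ p ∈ [3,5,7], FK p 1 8 < 1000) ∧ bB 3 8 + bB 5 8 + bB 7 8 < 4096 := by
  decide +kernel

theorem sv_of_prime {p : ℕ} (hp : p.Prime) : sv p = true := by
  unfold sv
  rw [List.all_eq_true]
  intro d hd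
  simp only [Bool.or_eq_true, Bool.not_eq_true', ← Bool.not_eq_true, Nat.beq_eq]
  by_cases h : p % d = 0
  · right
    rcases (Nat.dvd_prime hp).mp (Nat.dvd_of_mod_eq_zero h) with h1 | h1
    · subst h1; simp at hd
    · exact h1.symm
  · exact Or.inl h

theorem chkB_spec : ∀ {t}, chkB t = true → ∀ p, p.Prime → 11 ≤ p → p < 11 + t →
    chkA p 1 1 (500 / p) = true := by
  intro t
  induction t with
  | zero => intro _ p _ h1 h2; omega
  | succ t ih =>
    intro h p hp h1 h2
    rw [chkB, forceN_eq, Bool.and_eq_true] at h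
    rcases Nat.lt_or_ge p (11 + t) with h3 | h3
    · exact ih h.2 p hp h1 h3
    · obtain rfl : p = 11 + t := by omega
      simpa [sv_of_prime hp] using h.1

def wt (p : ℕ) : ℕ := if p = 2 then 6500 else if p = 3 then 2800 else if p = 5 then 40 else
  if p = 7 then 90 else 1

theorem bad_large {n p : ℕ} (hp : p.Prime) (hn : 10 ≤ n) (hn' : n ≤ 500) (hpn : p ≤ n)
    (H : Subgroup (Perm (Fin n))) (hH : IsPGroup p H) (hA : H ≤ alternatingGroup (Fin n)) :
    20000 * (badSet H).card ≤ wt p * n.factorial := by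
  refine bad_of_chk hp hn' ?_ H hH hA
  by_cases h2 : p = 2
  · subst h2; exact chkA_spec chk2 _ (by omega) (by omega)
  by_cases h3 : p = 3
  · subst h3; exact chkA_spec chk3 _ (by omega) (by omega)
  by_cases h5 : p = 5
  · subst h5; exact chkA_spec chk5 _ (by omega) (by omega)
  by_cases h7 : p = 7
  · subst h7; exact chkA_spec chk7 _ (by omega) (by omega)
  have h11 : 11 ≤ p := by
    by_contra hc
    have : p < 11 := by omega
    interval_cases p <;> first | omega | (revert hp; norm_num)
  have := chkA_spec (chkB_spec chkR p hp h11 (by omega)) (n / p)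
    (Nat.div_pos hpn hp.pos) (by have := Nat.div_le_div_right (c := p) hn'; omega)
  simpa [wt, h2, h3, h5, h7] using this

theorem wt_sum : ∑ p ∈ Finset.range 501, wt p < 10000 := by decide +kernel

/-- union bound -/
theorem exists_good {n : ℕ} (P : Finset ℕ) (K : ℕ → Subgroup (Perm (Fin n)))
    (h : 2 * ∑ p ∈ P, (badSet (K p)).card < n.factorial) (hn : 2 ≤ n) :
    ∃ x : Perm (Fin n), sign x = 1 ∧ ∀ p ∈ P, x ∉ badSet (K p) := by
  classical
  by_contra hc
  push Not at hc
  have h1 : (Finset.univ.filter (fun x : Perm (Fin n) => sign x = 1)) ⊆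
      P.biUnion fun p => badSet (K p) := by
    intro x hx
    obtain ⟨p, hp, hx⟩ := hc x (by simpa using hx)
    exact Finset.mem_biUnion.mpr ⟨p, hp, hx⟩
  have h2 := (Finset.card_le_card h1).trans Finset.card_biUnion_le
  have : Nontrivial (Fin n) := Fin.nontrivial_iff_two_le.mpr hn
  have h3 := two_mul_card_alternatingGroup (α := Fin n)
  rw [Fintype.card_perm, Fintype.card_fin] at h3
  have h4 : Fintype.card (alternatingGroup (Fin n)) =
      (Finset.univ.filter (fun x : Perm (Fin n) => sign x = 1)).card := by
    rw [← Fintype.card_coe]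
    exact Fintype.card_congr (Equiv.subtypeEquivRight (by simp))
  omega

theorem exists_good_main {n : ℕ} (h5 : 5 ≤ n) (h500 : n ≤ 500) (h8 : n ≠ 8) (P : Finset ℕ)
    (hP : ∀ p ∈ P, p.Prime ∧ p ≤ n) (K : ℕ → Subgroup (Perm (Fin n)))
    (hK : ∀ p ∈ P, IsPGroup p (K p)) (hA : ∀ p ∈ P, K p ≤ alternatingGroup (Fin n)) :
    ∃ x : Perm (Fin n), sign x = 1 ∧ ∀ p ∈ P, x ∉ badSet (K p) := by
  refine exists_good P K ?_ (by omega)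
  rcases Nat.lt_or_ge n 10 with h10 | h10
  · have hm : n ∈ [5,6,7,9] := by simp; omega
    obtain ⟨ha, hb⟩ := small_num n hm
    have hsub : ∀ p ∈ P, p ∈ [2,3,5,7] := by
      intro p hp
      obtain ⟨h1, h2⟩ := hP p hp
      have : p < 10 := by omega
      interval_cases p <;> first | (simp; done) | (exfalso; revert h1; norm_num)
    refine lt_of_le_of_lt (Nat.mul_le_mul_left 2 ?_) hb
    calc ∑ p ∈ P, (badSet (K p)).card ≤ ∑ p ∈ P, bB p n := Finset.sum_le_sum fun p hp =>
          bad_small (hP p hp).1 (by omega) _ (hK p hp) (hA p hp) (ha p (hsub p hp))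
      _ ≤ _ := Finset.sum_le_sum_of_subset fun p hp => by
          have := hsub p hp
          simp only [Finset.mem_filter, Finset.mem_insert, Finset.mem_singleton]
          exact ⟨by simpa using this, (hP p hp).2⟩
  · have h1 : 20000 * ∑ p ∈ P, (badSet (K p)).card ≤ (∑ p ∈ P, wt p) * n.factorial := by
      rw [Finset.mul_sum, Finset.sum_mul]
      exact Finset.sum_le_sum fun p hp =>
        bad_large (hP p hp).1 h10 h500 (hP p hp).2 _ (hK p hp) (hA p hp)
    have h2 : ∑ p ∈ P, wt p ≤ ∑ p ∈ Finset.range 501, wt p :=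
      Finset.sum_le_sum_of_subset fun p hp => by
        have := (hP p hp).2
        simp; omega
    have h3 : ∑ p ∈ P, wt p ≤ 9999 := by have := wt_sum; omega
    have h4 := Nat.mul_le_mul_right n.factorial h3
    have := Nat.factorial_pos n
    omega

/-! the case `n = 8` -/

def P8 : Subgroup (Perm (Fin 8)) where
  carrier := {g | ∀ i j : Fin 8, (i.1 / 2 = j.1 / 2 ↔ (g i).1 / 2 = (g j).1 / 2) ∧
    (i.1 / 4 = j.1 / 4 ↔ (g i).1 / 4 = (g j).1 / 4)}
  one_mem' := by intro i j; simp
  mul_mem' := by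
    intro a b ha hb i j
    exact ⟨(hb i j).1.trans (ha _ _).1, (hb i j).2.trans (ha _ _).2⟩
  inv_mem' := by
    intro a ha i j
    have h := ha (a⁻¹ i) (a⁻¹ j)
    have e : ∀ k, a (a⁻¹ k) = k := fun k => by simp
    rw [e, e] at h
    exact ⟨h.1.symm, h.2.symm⟩

theorem mem_P8 (g : Perm (Fin 8)) : g ∈ P8 ↔ ∀ i j : Fin 8,
    (i.1 / 2 = j.1 / 2 ↔ (g i).1 / 2 = (g j).1 / 2) ∧
    (i.1 / 4 = j.1 / 4 ↔ (g i).1 / 4 = (g j).1 / 4) := Iff.rfl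

instance : DecidablePred (· ∈ P8) := fun g => decidable_of_iff _ (mem_P8 g).symm

abbrev T8 := Fin 8 × Fin 2 × Fin 4 × Fin 2

def cod8 (h : Perm (Fin 8)) : T8 :=
  (h 0, ⟨(h 2).1 % 2, Nat.mod_lt _ (by norm_num)⟩, ⟨(h 4).1 % 4, Nat.mod_lt _ (by norm_num)⟩,
    ⟨(h 6).1 % 2, Nat.mod_lt _ (by norm_num)⟩)

def sb8 (t : T8) (j : ℕ) : ℕ :=
  if j = t.1.1 / 2 then t.1.1 % 2 else
  if j / 2 = t.1.1 / 4 then t.2.1.1 else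
  if j % 2 = t.2.2.1.1 / 2 then t.2.2.1.1 % 2 else t.2.2.2.1

def GB (t : T8) : Perm (Fin 8) :=
  (swap 0 1) ^ sb8 t 0 * (swap 2 3) ^ sb8 t 1 * (swap 4 5) ^ sb8 t 2 * (swap 6 7) ^ sb8 t 3 *
  (swap 0 2 * swap 1 3) ^ (if t.1.1 / 4 = 0 then t.1.1 / 2 % 2 else t.2.2.1.1 / 2) *
  (swap 4 6 * swap 5 7) ^ (if t.1.1 / 4 = 0 then t.2.2.1.1 / 2 else t.1.1 / 2 % 2) *
  (swap 0 4 * swap 1 5 * swap 2 6 * swap 3 7) ^ (t.1.1 / 4)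

theorem GB_mem (t : T8) : GB t ∈ P8 := by
  have h1 : swap (0 : Fin 8) 1 ∈ P8 := by decide +kernel
  have h2 : swap (2 : Fin 8) 3 ∈ P8 := by decide +kernel
  have h3 : swap (4 : Fin 8) 5 ∈ P8 := by decide +kernel
  have h4 : swap (6 : Fin 8) 7 ∈ P8 := by decide +kernel
  have h5 : swap (0 : Fin 8) 2 * swap 1 3 ∈ P8 := by decide +kernel
  have h6 : swap (4 : Fin 8) 6 * swap 5 7 ∈ P8 := by decide +kernel
  have h7 : swap (0 : Fin 8) 4 * swap 1 5 * swap 2 6 * swap 3 7 ∈ P8 := by decide +kernel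
  unfold GB
  exact mul_mem (mul_mem (mul_mem (mul_mem (mul_mem (mul_mem (pow_mem h1 _) (pow_mem h2 _))
    (pow_mem h3 _)) (pow_mem h4 _)) (pow_mem h5 _)) (pow_mem h6 _)) (pow_mem h7 _)

theorem cod_GB : ∀ t : T8, cod8 (GB t) = t := by decide +kernel

def g8 : Perm (Fin 8) := swap 3 4 * swap 4 6

theorem g8_spec : ∀ t : T8, sign (GB t) = 1 → g8 * GB t * g8⁻¹ ∈ P8 → GB t = 1 := by
  decide +kernel

theorem g8_sign : sign g8 = 1 := by decide +kernel

theorem cod_inj {g h : Perm (Fin 8)} (hg : g ∈ P8) (hh : h ∈ P8) (e : cod8 g = cod8 h) : g = h := by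
  simp only [cod8, Prod.mk.injEq, Fin.mk.injEq] at e
  obtain ⟨e0, e2, e4, e6⟩ := e
  have e0 := congrArg Fin.val e0
  have key : ∀ (a0 a1 a2 a3 : ℕ), a0 < 8 → a1 < 8 → a2 < 8 → a3 < 8 →
    a0 ≠ a1 → a2 ≠ a3 → a0 / 2 = a1 / 2 → a2 / 2 = a3 / 2 → a0 / 4 = a2 / 4 → a0 / 2 ≠ a2 / 2 →
    a1 = a0 + 1 - 2 * (a0 % 2) ∧ a2 = a0 / 4 * 4 + (2 - a0 / 2 % 2 * 2) + a2 % 2 ∧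
    a3 = a2 + 1 - 2 * (a2 % 2) := by intros; omega
  have ineq : ∀ (f : Perm (Fin 8)) (i j : Fin 8), i ≠ j → (f i).1 ≠ (f j).1 := by
    intro f i j hij h; exact hij (f.injective (Fin.ext h))
  have st : ∀ f ∈ P8, _ := fun f hf => key (f 0).1 (f 1).1 (f 2).1 (f 3).1 (f 0).2 (f 1).2 (f 2).2 (f 3).2
    (ineq f 0 1 (by decide)) (ineq f 2 3 (by decide)) ((hf 0 1).1.mp (by decide))
    ((hf 2 3).1.mp (by decide)) ((hf 0 2).2.mp (by decide)) (mt (hf 0 2).1.mpr (by decide))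
  have st' : ∀ f ∈ P8, _ := fun f hf => key (f 4).1 (f 5).1 (f 6).1 (f 7).1 (f 4).2 (f 5).2 (f 6).2 (f 7).2
    (ineq f 4 5 (by decide)) (ineq f 6 7 (by decide)) ((hf 4 5).1.mp (by decide))
    ((hf 6 7).1.mp (by decide)) ((hf 4 6).2.mp (by decide)) (mt (hf 4 6).1.mpr (by decide))
  have n4 : ∀ f ∈ P8, (f 4).1 = 4 - (f 0).1 / 4 * 4 + (f 4).1 % 4 := by
    intro f hf
    have h1 : (f 0).1 / 4 ≠ (f 4).1 / 4 := mt (hf 0 4).2.mpr (by decide)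
    have h2 := (f 0).2
    have h3 := (f 4).2
    omega
  obtain ⟨a1, a2, a3⟩ := st g hg
  obtain ⟨b1, b2, b3⟩ := st h hh
  obtain ⟨a5, a6, a7⟩ := st' g hg
  obtain ⟨b5, b6, b7⟩ := st' h hh
  have a4 := n4 g hg
  have b4 := n4 h hh
  rw [e0] at a1 a2 a4
  rw [e2] at a2
  rw [e4] at a4
  have c1 := a1.trans b1.symm
  have c2 := a2.trans b2.symm
  have c4 := a4.trans b4.symm
  rw [c2] at a3
  rw [c4] at a5 a6
  rw [e6] at a6
  have c3 := a3.trans b3.symm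
  have c5 := a5.trans b5.symm
  have c6 := a6.trans b6.symm
  rw [c6] at a7
  have c7 := a7.trans b7.symm
  ext i
  fin_cases i <;> assumption

theorem card_P8 : Nat.card P8 = 128 := by
  have : Function.Bijective (fun g : P8 => cod8 g.1) := by
    constructor
    · intro g h e
      exact Subtype.ext (cod_inj g.2 h.2 e)
    · intro t
      exact ⟨⟨GB t, GB_mem t⟩, cod_GB t⟩
  rw [Nat.card_congr (Equiv.ofBijective _ this)]
  simp [T8]

theorem g8_good (h : Perm (Fin 8)) (hh : h ∈ P8) (hs : sign h = 1) (hc : g8 * h * g8⁻¹ ∈ P8) :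
    h = 1 := by
  have e : h = GB (cod8 h) := cod_inj hh (GB_mem _) (cod_GB _).symm
  rw [e] at hs hc ⊢
  exact g8_spec _ hs hc

theorem exists_good_two (H : Subgroup (Perm (Fin 8))) (hH : IsPGroup 2 H)
    (hA : H ≤ alternatingGroup (Fin 8)) :
    ∃ x : Perm (Fin 8), sign x = 1 ∧ ∀ g ∈ H, x * g * x⁻¹ ∈ H → g = 1 := by
  have : Fact (Nat.Prime 2) := ⟨Nat.prime_two⟩
  have hcard : Nat.card P8 = 2 ^ (Nat.card (Perm (Fin 8))).factorization 2 := by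
    rw [card_P8, Nat.card_perm, Nat.card_fin, Nat.factorization_def _ Nat.prime_two]
    have : padicValNat 2 (Nat.factorial 8) = 7 := by
      rw [show Nat.factorial 8 = 2 ^ 7 * 315 by decide +kernel, padicValNat.mul (by norm_num) (by norm_num),
        padicValNat.prime_pow, padicValNat.eq_zero_of_not_dvd (by norm_num)]
    rw [this]; norm_num
  let Q : Sylow 2 (Perm (Fin 8)) := Sylow.ofCard P8 hcard
  obtain ⟨P, hP⟩ := hH.exists_le_sylow
  obtain ⟨y, hy⟩ := MulAction.exists_smul_eq (Perm (Fin 8)) P Q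
  have key : ∀ g ∈ H, y * g * y⁻¹ ∈ P8 := by
    intro g hg
    have : y * g * y⁻¹ ∈ ((y • P : Sylow 2 (Perm (Fin 8))) : Subgroup (Perm (Fin 8))) := by
      rw [Sylow.coe_subgroup_smul]
      exact ⟨g, hP hg, rfl⟩
    rw [hy] at this
    exact this
  refine ⟨y⁻¹ * g8 * y, ?_, ?_⟩
  · simp [g8_sign]
  · intro g hg hx
    have h1 := key _ hx
    have h2 := g8_good _ (key g hg) ?_ ?_
    · simpa using h2
    · have := hA hg
      rw [mem_alternatingGroup] at this
      simp [this]
    · convert h1 using 1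
      group

theorem exists_good_eight (P : Finset ℕ) (hP : ∀ p ∈ P, p.Prime ∧ p ≤ 8)
    (K : ℕ → Subgroup (Perm (Fin 8)))
    (hK : ∀ p ∈ P, IsPGroup p (K p)) (hA : ∀ p ∈ P, K p ≤ alternatingGroup (Fin 8))
    (h2P : 2 ∈ P) (h64 : Nat.card (K 2) = 64) :
    ∃ x : Perm (Fin 8), sign x = 1 ∧ ∀ p ∈ P, x ∉ badSet (K p) := by
  classical
  obtain ⟨x, hx, hx'⟩ := exists_good_two (K 2) (hK 2 h2P) (hA 2 h2P)
  let f : K 2 × K 2 → Perm (Fin 8) := fun q => q.1.1 * x * q.2.1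
  have hf : Function.Injective f := by
    rintro ⟨a, b⟩ ⟨a', b'⟩ h
    have h : a.1 * x * b.1 = a'.1 * x * b'.1 := h
    have h1 : x * (b'.1 * b.1⁻¹) * x⁻¹ = a'.1⁻¹ * a.1 := by
      have : x * b'.1 = a'.1⁻¹ * (a.1 * x * b.1) := by rw [h]; group
      rw [← mul_assoc, this]; group
    have h2 := hx' (b'.1 * b.1⁻¹) (mul_mem b'.2 (inv_mem b.2))
      (by rw [h1]; exact mul_mem (inv_mem a'.2) a.2)
    have h3 : b'.1 = b.1 := by simpa [mul_inv_eq_one] using h2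
    have h4 : a.1 = a'.1 := by rw [h3] at h; simpa using h
    exact Prod.ext (Subtype.ext h4) (Subtype.ext h3.symm)
  have hcard : (Finset.univ.image f).card = 4096 := by
    rw [Finset.card_image_of_injective _ hf, Finset.card_univ, Fintype.card_prod,
      ← Nat.card_eq_fintype_card, h64]
  have hgood : ∀ y ∈ Finset.univ.image f, sign y = 1 ∧ y ∉ badSet (K 2) := by
    intro y hy
    obtain ⟨⟨a, b⟩, -, rfl⟩ := Finset.mem_image.mp hy
    have ha := hA 2 h2P a.2
    have hb := hA 2 h2P b.2
    rw [mem_alternatingGroup] at ha hb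
    refine ⟨by simp [f, ha, hb, hx], ?_⟩
    intro hbad
    simp only [badSet, Finset.mem_filter] at hbad
    obtain ⟨-, -, g, hg, hg1, hg2⟩ := hbad
    refine hg1 ?_
    have h1 := hx' (b.1 * g * b.1⁻¹) (mul_mem (mul_mem b.2 hg) (inv_mem b.2)) (by
      have := mul_mem (mul_mem (inv_mem a.2) hg2) a.2
      convert this using 1
      simp only [f]; group)
    simpa using h1
  have hodd : ∀ p ∈ P.erase 2, p ∈ [3,5,7] := by
    intro p hp
    obtain ⟨hp2, hp⟩ := Finset.mem_erase.mp hp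
    obtain ⟨h1, h2⟩ := hP p hp
    interval_cases p <;> first | omega | (simp; done) | (exfalso; revert h1; norm_num; done)
  have hsum : ((P.erase 2).biUnion fun p => badSet (K p)).card < 4096 := by
    refine lt_of_le_of_lt ?_ eight_num.2
    refine Finset.card_biUnion_le.trans ?_
    calc ∑ p ∈ P.erase 2, (badSet (K p)).card ≤ ∑ p ∈ P.erase 2, bB p 8 :=
          Finset.sum_le_sum fun p hp => by
            have hp' := Finset.mem_of_mem_erase hp
            exact bad_small (hP p hp').1 (by omega) _ (hK p hp') (hA p hp') (eight_num.1 p (hodd p hp))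
      _ ≤ ∑ p ∈ ({3,5,7} : Finset ℕ), bB p 8 := Finset.sum_le_sum_of_subset fun p hp => by
            simpa using hodd p hp
      _ = _ := by simp [add_assoc]
  have : ∃ y ∈ Finset.univ.image f, y ∉ (P.erase 2).biUnion fun p => badSet (K p) := by
    by_contra hc
    push Not at hc
    have := Finset.card_le_card (show Finset.univ.image f ⊆ _ from hc)
    omega
  obtain ⟨y, hy, hy'⟩ := this
  refine ⟨y, (hgood y hy).1, fun p hp => ?_⟩
  by_cases h2 : p = 2
  · subst h2; exact (hgood y hy).2
  · intro hb
    exact hy' (Finset.mem_biUnion.mpr ⟨p, Finset.mem_erase.mpr ⟨h2, hp⟩, hb⟩)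

theorem final_aux (n : ℕ) (h5 : 5 ≤ n) (h500 : n ≤ 500)
    (H : (p : ℕ) → p ∈ (Nat.card (alternatingGroup (Fin n))).primeFactors → Sylow p (alternatingGroup (Fin n))) :
    ∃ x : alternatingGroup (Fin n), ∀ (p : ℕ) (hp : p ∈ (Nat.card (alternatingGroup (Fin n))).primeFactors),
        (H p hp : Subgroup (alternatingGroup (Fin n))) ⊓
          Subgroup.map (MulAut.conj x⁻¹).toMonoidHom (H p hp : Subgroup (alternatingGroup (Fin n))) = ⊥ := by
  classical
  have : Nontrivial (Fin n) := Fin.nontrivial_iff_two_le.mpr (by omega)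
  have hcard : 2 * Nat.card (alternatingGroup (Fin n)) = n.factorial := by
    have h3 := two_mul_card_alternatingGroup (α := Fin n)
    rw [Fintype.card_perm, Fintype.card_fin] at h3
    rw [Nat.card_eq_fintype_card, h3]
  generalize hPd : (Nat.card (alternatingGroup (Fin n))).primeFactors = P at H ⊢
  have hP : ∀ p ∈ P, p.Prime ∧ p ≤ n := by
    intro p hp
    rw [← hPd] at hp
    have h1 := Nat.prime_of_mem_primeFactors hp
    refine ⟨h1, (h1.dvd_factorial).mp ?_⟩
    rw [← hcard]
    exact (Nat.dvd_of_mem_primeFactors hp).mul_left 2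
  let K : ℕ → Subgroup (Perm (Fin n)) := fun p =>
    if hp : p ∈ P then (H p hp : Subgroup (alternatingGroup (Fin n))).map
      (alternatingGroup (Fin n)).subtype else ⊥
  have hKe : ∀ p (hp : p ∈ P), K p = (H p hp : Subgroup (alternatingGroup (Fin n))).map
      (alternatingGroup (Fin n)).subtype := fun p hp => by simp [K, hp]
  have hK : ∀ p ∈ P, IsPGroup p (K p) := by
    intro p hp
    rw [hKe p hp]
    exact (H p hp).isPGroup'.map _
  have hA : ∀ p ∈ P, K p ≤ alternatingGroup (Fin n) := by
    intro p hp
    rw [hKe p hp]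
    rintro _ ⟨g, -, rfl⟩
    exact g.2
  have main : ∃ x : Perm (Fin n), sign x = 1 ∧ ∀ p ∈ P, x ∉ badSet (K p) := by
    by_cases h8 : n = 8
    · subst h8
      have hc : Nat.card (alternatingGroup (Fin 8)) = 20160 := by
        have : Nat.factorial 8 = 40320 := by decide +kernel
        omega
      have h2P : 2 ∈ P := by
        rw [← hPd, hc]
        simp [Nat.prime_two]
      refine exists_good_eight P hP K hK hA h2P ?_
      have : Fact (Nat.Prime 2) := ⟨Nat.prime_two⟩
      have h1 := (H 2 h2P).card_eq_multiplicity
      rw [hc, Nat.factorization_def _ Nat.prime_two] at h1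
      have h2 : padicValNat 2 20160 = 6 := by
        rw [show 20160 = 2 ^ 6 * 315 by norm_num, padicValNat.mul (by norm_num) (by norm_num),
          padicValNat.prime_pow, padicValNat.eq_zero_of_not_dvd (by norm_num)]
      rw [h2] at h1
      rw [hKe 2 h2P, ← Nat.card_congr (Subgroup.equivMapOfInjective _ _
        (alternatingGroup (Fin 8)).subtype_injective).toEquiv]
      exact h1
    · exact exists_good_main h5 h500 h8 P hP K hK hA
  obtain ⟨x, hx, hx'⟩ := main
  refine ⟨⟨x, mem_alternatingGroup.mpr hx⟩, fun p hp => ?_⟩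
  rw [eq_bot_iff]
  rintro g ⟨hg, h, hh, hgh⟩
  rw [Subgroup.mem_bot]
  by_contra hg1
  refine hx' p hp ?_
  simp only [badSet, Finset.mem_filter, Finset.mem_univ, true_and]
  refine ⟨hx, g.1, ?_, ?_, ?_⟩
  · rw [hKe p hp]; exact ⟨g, hg, rfl⟩
  · intro h1; exact hg1 (Subtype.ext h1)
  · rw [hKe p hp]
    refine ⟨h, hh, ?_⟩
    rw [← hgh]
    simp [mul_assoc]

end

end Aux19

/-- The Lisi–Sabatini conjecture for alternating groups `Aₙ` with `5 ≤ n ≤ 500`: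
for every choice of one Sylow `p`-subgroup `H p` of `G = Aₙ` for each prime divisor
`p` of `|G|`, there is an `x ∈ G` with `H p ⊓ (H p)^x = 1` for all such `p`. -/
theorem stmt19 (n : ℕ) (h5 : 5 ≤ n) (h500 : n ≤ 500)
    (H : (p : ℕ) → p ∈ (Nat.card (alternatingGroup (Fin n))).primeFactors →
      Sylow p (alternatingGroup (Fin n))) :
    ∃ x : alternatingGroup (Fin n),
      ∀ (p : ℕ) (hp : p ∈ (Nat.card (alternatingGroup (Fin n))).primeFactors),
        (H p hp : Subgroup (alternatingGroup (Fin n))) ⊓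
          Subgroup.map (MulAut.conj x⁻¹).toMonoidHom
            (H p hp : Subgroup (alternatingGroup (Fin n))) = ⊥ := by
  exact Aux19.final_aux n h5 h500 H
end
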